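/- Let C be a crumpled n-cube that is a closed n-cell-complement, and let X be a closed subset of Bd C. Then a standard flattening of C relative to X exists: there are a crumpled n-cube C_X ⊆ S^n with C ⊆ C_X and a homeomorphism h_X : Bd C → Bd C_X such that (C, C_X, h_X) ∈ W_n, h_X(x) = x for all x ∈ X, Bd C_X \ X is locally collared in C_X at each of its points, and there is a strong deformation retraction r : C_X → C with r ∘ h_X = id_{Bd C} and with r(y) ∈ Bd C \ X for every y ∈ C_X whose r-point-preimage r⁻¹(r(y)) contains more than one point. (Existence of standard flattenings, Section 5) -/

import Mathlib

noncomputable section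

open Metric Set unitInterval

/-- The ambient Euclidean space `ℝ^{n+1}` in which the sphere `S^n` lives. -/
abbrev Amb (n : ℕ) := EuclideanSpace ℝ (Fin (n + 1))

/-- The unit sphere `S^n` inside `ℝ^{n+1}`. -/
def Sph (n : ℕ) : Set (Amb n) := Metric.sphere 0 1

/-- A crumpled `n`-cube: the union of the image `bd` of a topological embedding of the
sphere `S^{n-1}` into `S^n` together with one of the connected components `int` of
`S^n \ bd`. -/
structure CrumpledCube (n : ℕ) where
  bd : Set (Amb n)
  int : Set (Amb n)
  bd_subset_sphere : bd ⊆ Sph n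
  exists_embedding : ∃ e : ↥(Sph (n - 1)) → Amb n,
      Continuous e ∧ Function.Injective e ∧ Set.range e = bd
  int_component : ∃ x, x ∈ Sph n \ bd ∧ int = connectedComponentIn (Sph n \ bd) x

namespace CrumpledCube

/-- The underlying set of a crumpled cube. -/
def carrier {n : ℕ} (C : CrumpledCube n) : Set (Amb n) := C.bd ∪ C.int

lemma bd_subset_carrier {n : ℕ} (C : CrumpledCube n) : C.bd ⊆ C.carrier :=
  Set.subset_union_left

end CrumpledCube

/-- `f : C → D` is a map associated with the triple `(C, D, h)`: it is continuous,
restricts to `h` on `Bd C`, and satisfies `f⁻¹(Bd D) = Bd C`. -/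
def IsAssociatedMap {n : ℕ} (C D : CrumpledCube n) (h : ↥C.bd ≃ₜ ↥D.bd)
    (f : ↥C.carrier → ↥D.carrier) : Prop :=
  Continuous f ∧
    (∀ (x : ↥C.carrier) (hx : (x : Amb n) ∈ C.bd),
      ((f x : ↥D.carrier) : Amb n) = ((h ⟨(x : Amb n), hx⟩ : ↥D.bd) : Amb n)) ∧
    (∀ x : ↥C.carrier, ((f x : ↥D.carrier) : Amb n) ∈ D.bd ↔ (x : Amb n) ∈ C.bd)

/-- The triple `(C, D, h)` belongs to the collection `𝒲_n`. -/
def MemW {n : ℕ} (C D : CrumpledCube n) (h : ↥C.bd ≃ₜ ↥D.bd) : Prop :=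
  ∃ f : ↥C.carrier → ↥D.carrier, IsAssociatedMap C D h f

/-- The image `h(T)` of a subset `T` of `Bd C` under a boundary homeomorphism
`h : Bd C → Bd D`, as a subset of the ambient space. -/
def bdImage {n : ℕ} {C D : CrumpledCube n} (h : ↥C.bd ≃ₜ ↥D.bd) (T : Set (Amb n)) :
    Set (Amb n) :=
  (fun x : ↥C.bd => ((h x : ↥D.bd) : Amb n)) '' {x : ↥C.bd | (x : Amb n) ∈ T}

/-- `T` is a homotopy taming set for the crumpled cube `C`. -/
def IsHomotopyTamingSet {n : ℕ} (C : CrumpledCube n) (T : Set (Amb n)) : Prop :=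
  T ⊆ C.bd ∧
    ∀ (m : C(I × I, ↥C.carrier)) (ε : ℝ), 0 < ε →
      ∃ m' : C(I × I, ↥C.carrier),
        (∀ x, dist (m x) (m' x) < ε) ∧ ∀ x, ((m' x : ↥C.carrier) : Amb n) ∈ T ∪ C.int

/-- `Bd C` is locally collared in `C` at the point `p`. -/
def LocallyCollaredAt {n : ℕ} (C : CrumpledCube n) (p : ↥C.carrier) : Prop :=
  ∃ N : Set ↥C.carrier, IsOpen N ∧ p ∈ N ∧
    ∃ φ : ↥N ≃ₜ ↥(N ∩ {x : ↥C.carrier | (x : Amb n) ∈ C.bd}) × ↥(Set.Ico (0 : ℝ) 1),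
      ∀ (x : ↥N) (hx : ((x : ↥C.carrier) : Amb n) ∈ C.bd),
        φ x = (⟨(x : ↥C.carrier), ⟨x.2, hx⟩⟩, ⟨0, ⟨le_rfl, zero_lt_one⟩⟩)

/-- The wild set of a crumpled cube: the points of `Bd C` at which `Bd C` fails to be
locally collared in `C`. -/
def wildSet {n : ℕ} (C : CrumpledCube n) : Set (Amb n) :=
  {p | ∃ hp : p ∈ C.bd, ¬ LocallyCollaredAt C ⟨p, C.bd_subset_carrier hp⟩}

/-- `C` is strictly wilder than `D`. -/
def StrictlyWilder {n : ℕ} (C D : CrumpledCube n) : Prop :=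
  (∃ h : ↥C.bd ≃ₜ ↥D.bd, MemW C D h) ∧ ∀ H : ↥D.bd ≃ₜ ↥C.bd, ¬ MemW D C H

/-- A crumpled `n`-cube is a closed `n`-cell-complement if the complement of its
interior in `S^n` is an `n`-cell. -/
def IsClosedCellComplement {n : ℕ} (C : CrumpledCube n) : Prop :=
  Nonempty (↥(Sph n \ C.int) ≃ₜ ↥(Metric.closedBall (0 : EuclideanSpace ℝ (Fin n)) 1))
/-- `(C_X, h_X)` is a standard flattening of the crumpled cube `C` relative to
`X ⊆ Bd C`. -/
def IsStandardFlattening {n : ℕ} (C : CrumpledCube n) (X : Set (Amb n))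
    (CX : CrumpledCube n) (hX : ↥C.bd ≃ₜ ↥CX.bd) : Prop :=
  MemW C CX hX ∧
  (∀ x : ↥C.bd, (x : Amb n) ∈ X → ((hX x : ↥CX.bd) : Amb n) = (x : Amb n)) ∧
  C.carrier ⊆ CX.carrier ∧
  (∀ (p : Amb n) (hp : p ∈ CX.bd), p ∉ X →
    LocallyCollaredAt CX ⟨p, CX.bd_subset_carrier hp⟩) ∧
  ∃ r : ↥CX.carrier → ↥CX.carrier,
    Continuous r ∧
    (∀ y, ((r y : ↥CX.carrier) : Amb n) ∈ C.carrier) ∧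
    (∀ y : ↥CX.carrier, ((y : ↥CX.carrier) : Amb n) ∈ C.carrier → r y = y) ∧
    (∃ F : C(↥CX.carrier × I, ↥CX.carrier),
      (∀ y, F (y, 0) = y) ∧ (∀ y, F (y, 1) = r y) ∧
      (∀ (y : ↥CX.carrier) (t : I), ((y : ↥CX.carrier) : Amb n) ∈ C.carrier → F (y, t) = y)) ∧
    (∀ (x : ↥C.bd) (hb : ((hX x : ↥CX.bd) : Amb n) ∈ CX.carrier),
      ((r ⟨((hX x : ↥CX.bd) : Amb n), hb⟩ : ↥CX.carrier) : Amb n) = (x : Amb n)) ∧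
    (∀ y : ↥CX.carrier, (∃ y', y' ≠ y ∧ r y' = r y) →
      ((r y : ↥CX.carrier) : Amb n) ∈ C.bd \ X)

/-!
Let `K = S^n \ Int C` be the complementary cell. By invariance of domain a homeomorphism from `K`
to the unit ball takes `Bd C` to the unit sphere, so `K` has radial coordinates over `Bd C`. The
graph of half the distance to `X ∪ {0}` in these coordinates bounds the flattening. Off `X` it is
pushed strictly into `K`, where the radii provide a collar, and sliding along the radii retracts
the flattening to `C`.

A map associated with the flattening must carry `Int C` off the graph, although `C` need not be
collared. A retraction of the ambient space to `K` joins each point of `C` near `Bd C \ X` to a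
point of `K` by a short segment. Following the segment and retracting to `C` carries the point to
`Bd C`, from where it is carried up the radius, as far as the graph only if it started on `Bd C`.
-/

/-! ### The no-retraction theorem for differentiable maps -/

section NoRetraction

open MeasureTheory Topology Polynomial
open scoped NNReal

lemma exists_polynomial_eval_eq_det_one_add_smul {K V : Type*} [Field K] [AddCommGroup V]
    [Module K V] [FiniteDimensional K V] (A : V →ₗ[K] V) :
    ∃ q : K[X], q.natDegree ≤ Module.finrank K V ∧ ∀ t, q.eval t = (1 + t • A).det := by
  let b := Module.finBasis K V
  let M := LinearMap.toMatrix b b A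
  refine ⟨_, (natDegree_det_X_add_C_le M 1).trans (by simp), fun t => ?_⟩
  rw [← LinearMap.det_toMatrix b, map_add, map_smul, LinearMap.toMatrix_one,
    ← coe_evalRingHom, RingHom.map_det]
  congr 1
  ext i j
  by_cases hij : i = j <;> simp [M, hij, add_comm, mul_comm t]

lemma integral_eval_eq_of_forall_mem {α : Type*} [MeasurableSpace α] {μ : Measure α}
    {q : α → ℝ[X]} {s : Finset ℝ} (hs : s.Nonempty) (hdeg : ∀ a, (q a).degree < s.card) {c : ℝ}
    (hint : ∀ t ∈ s, Integrable (fun a => (q a).eval t) μ)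
    (hc : ∀ t ∈ s, ∫ a, (q a).eval t ∂μ = c) (t : ℝ) : ∫ a, (q a).eval t ∂μ = c := by
  have hinj : InjOn id (s : Set ℝ) := injOn_id _
  have hlagrange : ∀ a, (q a).eval t = ∑ v ∈ s, (q a).eval v * (Lagrange.basis s id v).eval t :=
    fun a => by
      conv_lhs => rw [Lagrange.eq_interpolate hinj (hdeg a), Lagrange.interpolate_apply]
      simp only [eval_finsetSum, eval_mul, eval_C, id_eq]
  calc ∫ a, (q a).eval t ∂μ
      = ∑ v ∈ s, ∫ a, (q a).eval v * (Lagrange.basis s id v).eval t ∂μ := by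
        simp_rw [hlagrange]
        exact integral_finsetSum _ fun v hv => (hint v hv).mul_const _
    _ = ∑ v ∈ s, c * (Lagrange.basis s id v).eval t :=
        Finset.sum_congr rfl fun v hv => by rw [integral_mul_const, hc v hv]
    _ = c := by
        rw [← Finset.mul_sum, ← eval_finsetSum, Lagrange.sum_basis hinj hs, eval_one, mul_one]

variable {E : Type*} [NormedAddCommGroup E] [NormedSpace ℝ E]

section Perturbation

variable {h : E → E} {c : ℝ≥0}

lemma approximatesLinearOn_id_add {s : Set E} (hh : LipschitzOnWith c h s) :
    ApproximatesLinearOn (fun x => x + h x) (ContinuousLinearEquiv.refl ℝ E : E →L[ℝ] E) s c := by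
  refine LipschitzOnWith.approximatesLinearOn ?_
  convert hh using 1
  ext x
  simp

lemma subsingleton_or_lt_inv_nnnorm_refl_symm (hc : c < 1) :
    Subsingleton E ∨ c < ‖((ContinuousLinearEquiv.refl ℝ E).symm : E →L[ℝ] E)‖₊⁻¹ := by
  rcases subsingleton_or_nontrivial E with hE | hE
  · exact Or.inl hE
  · refine Or.inr ?_
    have : ‖((ContinuousLinearEquiv.refl ℝ E).symm : E →L[ℝ] E)‖₊ = 1 :=
      ContinuousLinearMap.nnnorm_id
    rwa [this, inv_one]

lemma injOn_id_add_of_lipschitzOnWith {s : Set E} (hh : LipschitzOnWith c h s) (hc : c < 1) :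
    InjOn (fun x => x + h x) s :=
  (approximatesLinearOn_id_add hh).injOn (subsingleton_or_lt_inv_nnnorm_refl_symm hc)

lemma isOpen_image_id_add_of_lipschitzOnWith [CompleteSpace E] {s : Set E} (hs : IsOpen s)
    (hh : LipschitzOnWith c h s) (hc : c < 1) : IsOpen ((fun x => x + h x) '' s) :=
  (approximatesLinearOn_id_add hh).open_image
    (ContinuousLinearEquiv.refl ℝ E).toNonlinearRightInverse hs
    (subsingleton_or_lt_inv_nnnorm_refl_symm hc)

lemma mapsTo_closedBall_id_add_of_lipschitzOnWith (hh : LipschitzOnWith c h (closedBall 0 1))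
    (hc : c ≤ 1) (hzero : ∀ x ∈ sphere (0 : E) 1, h x = 0) :
    MapsTo (fun x => x + h x) (closedBall 0 1) (closedBall 0 1) := by
  intro x hx
  rcases subsingleton_or_nontrivial E with hE | hE
  · simp [Subsingleton.elim (x + h x) 0]
  obtain ⟨u, hu, hxu⟩ : ∃ u ∈ sphere (0 : E) 1, ‖x - u‖ = 1 - ‖x‖ := by
    rw [mem_closedBall_zero_iff] at hx
    rcases eq_or_ne x 0 with rfl | hx0
    · obtain ⟨u, hu⟩ := NormedSpace.sphere_nonempty (E := E) (x := 0) (r := 1) |>.2 zero_le_one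
      exact ⟨u, hu, by simpa using hu⟩
    · refine ⟨‖x‖⁻¹ • x, by simp [norm_smul, hx0], ?_⟩
      have hsub : x - ‖x‖⁻¹ • x = (1 - ‖x‖⁻¹) • x := by rw [sub_smul, one_smul]
      have hinv : 1 ≤ ‖x‖⁻¹ := (one_le_inv₀ (norm_pos_iff.2 hx0)).2 hx
      rw [hsub, norm_smul, Real.norm_of_nonpos (by linarith), neg_sub, sub_mul,
        inv_mul_cancel₀ (norm_ne_zero_iff.2 hx0), one_mul]
  rw [mem_closedBall_zero_iff]
  calc ‖x + h x‖ ≤ ‖x‖ + ‖h x - h u‖ := by rw [hzero u hu, sub_zero]; exact norm_add_le _ _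
    _ ≤ ‖x‖ + c * ‖x - u‖ := by gcongr; exact hh.norm_sub_le hx (sphere_subset_closedBall hu)
    _ ≤ ‖x‖ + 1 * ‖x - u‖ := by gcongr; exact_mod_cast hc
    _ = 1 := by rw [hxu]; ring

end Perturbation

lemma image_ball_eq_ball [ProperSpace E] {f : E → E} {x : E} {r : ℝ}
    (hf : ContinuousOn f (closedBall x r)) (hinj : InjOn f (closedBall x r))
    (hmaps : MapsTo f (closedBall x r) (closedBall x r)) (hfix : ∀ y ∈ sphere x r, f y = y)
    (hopen : IsOpen (f '' ball x r)) : f '' ball x r = ball x r := by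
  have hmaps_ball : MapsTo f (ball x r) (ball x r) := by
    intro y hy
    have hfy := hmaps (ball_subset_closedBall hy)
    refine (mem_closedBall.1 hfy).lt_of_ne fun hsphere => (mem_ball.1 hy).ne ?_
    rwa [hinj hfy (ball_subset_closedBall hy) (hfix _ hsphere)] at hsphere
  refine hmaps_ball.image_subset.antisymm ?_
  rcases (ball x r).eq_empty_or_nonempty with hempty | ⟨y, hy⟩
  · simp [hempty]
  refine (convex_ball x r).isPreconnected.subset_of_closure_inter_subset hopen
    ⟨f y, hmaps_ball hy, mem_image_of_mem f hy⟩ ?_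
  have hclosed : IsClosed (f '' closedBall x r) :=
    ((isCompact_closedBall x r).image_of_continuousOn hf).isClosed
  rintro z ⟨hz, hz_ball⟩
  obtain ⟨w, hw, rfl⟩ := closure_minimal (image_mono ball_subset_closedBall) hclosed hz
  refine mem_image_of_mem f ((mem_closedBall.1 hw).lt_of_ne fun hsphere => ?_)
  rw [hfix w hsphere] at hz_ball
  exact (mem_ball.1 hz_ball).ne hsphere

variable [FiniteDimensional ℝ E]

lemma det_one_add_pos_of_norm_lt_one {A : E →L[ℝ] E} (hA : ‖A‖ < 1) : 0 < (1 + A).det := by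
  have hne : ∀ s ∈ Icc (0 : ℝ) 1, (1 + s • A).det ≠ 0 := fun s hs => by
    have hsA : ‖-(s • A)‖ < 1 := by
      rw [norm_neg, norm_smul, Real.norm_of_nonneg hs.1]
      exact (mul_le_of_le_one_left (norm_nonneg _) hs.2).trans_lt hA
    have hunit : IsUnit (1 + s • A) := by simpa using isUnit_one_sub_of_norm_lt_one hsA
    exact ((LinearMap.isUnit_iff_isUnit_det _).1
      (hunit.map (ContinuousLinearMap.toLinearMapRingHom :
        (E →L[ℝ] E) →+* (E →ₗ[ℝ] E)))).ne_zero
  by_contra! hneg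
  have hcont : ContinuousOn (fun s : ℝ => (1 + s • A).det) (Icc 0 1) :=
    (ContinuousLinearMap.continuous_det.comp (by fun_prop)).continuousOn
  have hdet_zero : (1 + (0 : ℝ) • A).det = 1 := by simp [ContinuousLinearMap.det]
  obtain ⟨s, hs, hs0⟩ := intermediate_value_Icc' zero_le_one hcont
    (show (0 : ℝ) ∈ Icc _ _ by simp only [hdet_zero, one_smul]; exact ⟨hneg, zero_le_one⟩)
  exact hne s hs hs0

variable [MeasurableSpace E] [BorelSpace E] (μ : Measure E) [μ.IsAddHaarMeasure]

lemma setIntegral_det_one_add_fderiv_of_nnnorm_le {h : E → E} {c : ℝ≥0} (hc : c < 1)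
    (hdiff : ∀ x ∈ closedBall (0 : E) 1, DifferentiableAt ℝ h x)
    (hbound : ∀ x ∈ closedBall (0 : E) 1, ‖fderiv ℝ h x‖₊ ≤ c)
    (hzero : ∀ x ∈ sphere (0 : E) 1, h x = 0) :
    ∫ x in ball (0 : E) 1, (1 + fderiv ℝ h x).det ∂μ = μ.real (ball (0 : E) 1) := by
  have hlip : LipschitzOnWith c h (closedBall 0 1) :=
    (convex_closedBall 0 1).lipschitzOnWith_of_nnnorm_fderiv_le hdiff hbound
  have hinj := injOn_id_add_of_lipschitzOnWith hlip hc
  have hderiv : ∀ x ∈ closedBall (0 : E) 1,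
      HasFDerivAt (fun x => x + h x) (1 + fderiv ℝ h x) x := fun x hx =>
    (hasFDerivAt_id x).add (hdiff x hx).hasFDerivAt
  have himage : (fun x => x + h x) '' ball 0 1 = ball 0 1 :=
    image_ball_eq_ball (fun x hx => (hderiv x hx).continuousAt.continuousWithinAt) hinj
      (mapsTo_closedBall_id_add_of_lipschitzOnWith hlip hc.le hzero)
      (fun x hx => by rw [hzero x hx, add_zero])
      (isOpen_image_id_add_of_lipschitzOnWith isOpen_ball (hlip.mono ball_subset_closedBall) hc)
  have hvolume := integral_image_eq_integral_abs_det_fderiv_smul μ measurableSet_ball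
    (fun x hx => (hderiv x (ball_subset_closedBall hx)).hasFDerivWithinAt)
    (hinj.mono ball_subset_closedBall) (fun _ => (1 : ℝ))
  rw [himage] at hvolume
  rw [← setIntegral_one_eq_measureReal, hvolume]
  refine setIntegral_congr_fun measurableSet_ball fun x hx => ?_
  have hpos := det_one_add_pos_of_norm_lt_one
    ((NNReal.coe_le_coe.2 (hbound x (ball_subset_closedBall hx))).trans_lt hc)
  simp only [abs_of_pos hpos, smul_eq_mul, mul_one]

lemma setIntegral_det_one_add_smul_fderiv_of_norm_le {g : E → E} {K t : ℝ} (ht : 0 ≤ t)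
    (htK : t * K < 1) (hdiff : ∀ x ∈ closedBall (0 : E) 1, DifferentiableAt ℝ g x)
    (hbound : ∀ x ∈ closedBall (0 : E) 1, ‖fderiv ℝ g x‖ ≤ K)
    (hzero : ∀ x ∈ sphere (0 : E) 1, g x = 0) :
    ∫ x in ball (0 : E) 1, (1 + t • fderiv ℝ g x).det ∂μ = μ.real (ball (0 : E) 1) := by
  have hK : 0 ≤ K := (norm_nonneg _).trans (hbound 0 (by simp))
  have hfderiv : ∀ x ∈ closedBall (0 : E) 1, fderiv ℝ (t • g) x = t • fderiv ℝ g x :=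
    fun x hx => fderiv_const_smul (hdiff x hx) t
  rw [← setIntegral_det_one_add_fderiv_of_nnnorm_le μ (h := t • g)
    (c := (t * K).toNNReal) (Real.toNNReal_lt_one.2 htK) (fun x hx => (hdiff x hx).const_smul t)
    (fun x hx => ?_) (fun x hx => by simp [hzero x hx])]
  · exact setIntegral_congr_fun measurableSet_ball fun x hx => by
      simp only [hfderiv x (ball_subset_closedBall hx)]
  · rw [hfderiv x hx, Real.le_toNNReal_iff_coe_le (mul_nonneg ht hK), coe_nnnorm, norm_smul,
      Real.norm_of_nonneg ht]
    exact mul_le_mul_of_nonneg_left (hbound x hx) ht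

-- For small `t` the formula with `t • g` in place of `g` is a change of variables; its left-hand
-- side being polynomial in `t`, it persists up to `t = 1`.
lemma setIntegral_det_one_add_fderiv {g : E → E}
    (hg : ∀ x ∈ closedBall (0 : E) 1, ContDiffAt ℝ 1 g x)
    (hzero : ∀ x ∈ sphere (0 : E) 1, g x = 0) :
    ∫ x in ball (0 : E) 1, (1 + fderiv ℝ g x).det ∂μ = μ.real (ball (0 : E) 1) := by
  have hcont : ContinuousOn (fderiv ℝ g) (closedBall 0 1) := fun x hx =>
    ((hg x hx).fderiv_right (m := 0) le_rfl).continuousAt.continuousWithinAt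
  obtain ⟨K, hK⟩ := (isCompact_closedBall (0 : E) 1).exists_bound_of_continuousOn hcont
  have hK₀ : 0 ≤ K := (norm_nonneg _).trans (hK 0 (by simp))
  have hdet : ∀ x, ∃ q : ℝ[X], q.natDegree ≤ Module.finrank ℝ E ∧
      ∀ t, q.eval t = (1 + t • fderiv ℝ g x).det := fun x =>
    exists_polynomial_eval_eq_det_one_add_smul (fderiv ℝ g x : E →ₗ[ℝ] E)
  choose q hdeg hq using hdet
  obtain ⟨s, hs, hcard⟩ := (Ioo_infinite (inv_pos.2 (by positivity : 0 < K + 1)))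
    |>.exists_subset_card_eq (Module.finrank ℝ E + 1)
  have hone := integral_eval_eq_of_forall_mem (μ := μ.restrict (ball 0 1)) (q := q) (s := s)
    (c := μ.real (ball (0 : E) 1)) (Finset.card_pos.1 (by omega)) (fun x => ?_) (fun t _ => ?_)
    (fun t ht => ?_) 1
  · simpa only [hq, one_smul] using hone
  · rw [hcard]
    exact degree_le_natDegree.trans_lt (by exact_mod_cast Nat.lt_succ_of_le (hdeg x))
  · simp_rw [hq]
    exact ((ContinuousLinearMap.continuous_det.comp_continuousOn
      (continuousOn_const.add (hcont.const_smul t))).integrableOn_compact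
        (isCompact_closedBall _ _)).mono_set ball_subset_closedBall
  · obtain ⟨ht0, htK⟩ := hs ht
    have htK1 : t * (K + 1) < 1 := by
      rwa [← lt_div_iff₀ (by positivity), one_div]
    simp_rw [hq]
    exact setIntegral_det_one_add_smul_fderiv_of_norm_le μ ht0.le (by linarith)
      (fun x hx => (hg x hx).differentiableAt one_ne_zero) hK hzero

end NoRetraction

section NoRetractionInner

open MeasureTheory Topology

variable {E : Type*} [NormedAddCommGroup E] [InnerProductSpace ℝ E] [FiniteDimensional ℝ E]

lemma det_fderiv_eq_zero_of_norm_eventually_const {r : E → E} {x : E} {c : ℝ} (hc : c ≠ 0)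
    (hr : DifferentiableAt ℝ r x) (hnorm : ∀ᶠ z in 𝓝 x, ‖r z‖ = c) :
    (fderiv ℝ r x).det = 0 := by
  by_contra hdet
  have hunit : IsUnit (fderiv ℝ r x : E →ₗ[ℝ] E) :=
    (LinearMap.isUnit_iff_isUnit_det _).2 (isUnit_iff_ne_zero.2 hdet)
  obtain ⟨y, hy⟩ : ∃ y, fderiv ℝ r x y = r x := ((Module.End.isUnit_iff _).1 hunit).2 (r x)
  have hderiv : HasFDerivAt (fun z => inner ℝ (r z) (r z)) _ x :=
    hr.hasFDerivAt.inner ℝ hr.hasFDerivAt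
  have hconst : HasFDerivAt (fun z => inner ℝ (r z) (r z)) (0 : E →L[ℝ] ℝ) x := by
    refine (hasFDerivAt_const (c ^ 2) x).congr_of_eventuallyEq ?_
    filter_upwards [hnorm] with z hz
    rw [real_inner_self_eq_norm_sq, hz]
  have happly := congrArg (fun T : E →L[ℝ] ℝ => T y) (hderiv.unique hconst)
  simp [hy, fderivInnerCLM_apply, hnorm.self_of_nhds, hc] at happly

theorem exists_norm_ne_one_of_forall_sphere_eq {r : E → E}
    (hr : ∀ x ∈ closedBall (0 : E) 1, ContDiffAt ℝ 1 r x)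
    (hfix : ∀ x ∈ sphere (0 : E) 1, r x = x) : ∃ x ∈ closedBall (0 : E) 1, ‖r x‖ ≠ 1 := by
  by_contra! hnorm
  borelize E
  let μ : Measure E := Measure.addHaar
  have hvolume : ∫ x in ball (0 : E) 1, (1 + fderiv ℝ (r - id) x).det ∂μ
      = μ.real (ball (0 : E) 1) :=
    setIntegral_det_one_add_fderiv μ (fun x hx => (hr x hx).sub contDiffAt_id)
      fun x hx => by simp [hfix x hx]
  have hzero : ∫ x in ball (0 : E) 1, (1 + fderiv ℝ (r - id) x).det ∂μ = 0 := by
    refine setIntegral_eq_zero_of_forall_eq_zero fun x hx => ?_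
    have hdiff := (hr x (ball_subset_closedBall hx)).differentiableAt one_ne_zero
    have hfderiv : 1 + fderiv ℝ (r - id) x = fderiv ℝ r x := by
      rw [fderiv_sub hdiff differentiableAt_id, fderiv_id]
      exact add_sub_cancel _ _
    rw [hfderiv]
    refine det_fderiv_eq_zero_of_norm_eventually_const one_ne_zero hdiff ?_
    filter_upwards [isOpen_ball.mem_nhds hx] with z hz
    exact hnorm z (ball_subset_closedBall hz)
  have hpos : 0 < μ.real (ball (0 : E) 1) :=
    ENNReal.toReal_pos (measure_ball_pos μ 0 one_pos).ne' measure_ball_lt_top.ne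
  exact hpos.ne' (hvolume.symm.trans hzero)

end NoRetractionInner

/-! ### Brouwer's fixed point theorem -/

section Brouwer

open Topology
open scoped ContDiff

variable {E : Type*} [NormedAddCommGroup E] [InnerProductSpace ℝ E]

/-- The reduced discriminant of the equation `‖x + s • d‖ ^ 2 = 1` in the unknown `s`. -/
def rayDiscrim (x d : E) : ℝ := inner ℝ x d ^ 2 + ‖d‖ ^ 2 * (1 - ‖x‖ ^ 2)

/-- The point at which the ray from the point `x` of the closed unit ball in the direction `d`
leaves the ball. The coefficient of `d` is the larger root `s` of `‖x + s • d‖ ^ 2 = 1`. -/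
def rayExit (x d : E) : E := x + ((-inner ℝ x d + √(rayDiscrim x d)) / ‖d‖ ^ 2) • d

lemma norm_rayExit {x d : E} (hx : ‖x‖ ≤ 1) (hd : d ≠ 0) : ‖rayExit x d‖ = 1 := by
  have hd2 : ‖d‖ ^ 2 ≠ 0 := by simpa using hd
  have hnonneg : 0 ≤ rayDiscrim x d :=
    add_nonneg (sq_nonneg _) (mul_nonneg (sq_nonneg _) (by nlinarith [norm_nonneg x]))
  obtain ⟨s, hs⟩ : ∃ s, s = (-inner ℝ x d + √(rayDiscrim x d)) / ‖d‖ ^ 2 := ⟨_, rfl⟩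
  have hroot : √(rayDiscrim x d) = s * ‖d‖ ^ 2 + inner ℝ x d := by
    rw [hs, div_mul_cancel₀ _ hd2]; ring
  have hsq := Real.sq_sqrt hnonneg
  rw [hroot, rayDiscrim] at hsq
  refine (sq_eq_sq₀ (norm_nonneg _) zero_le_one).1 (mul_left_cancel₀ hd2 ?_)
  rw [rayExit, ← hs, norm_add_sq_real, norm_smul, inner_smul_right, mul_pow, Real.norm_eq_abs,
    sq_abs]
  linear_combination hsq

lemma rayExit_of_norm_eq_one {x d : E} (hx : ‖x‖ = 1) (hd : 0 ≤ inner ℝ x d) :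
    rayExit x d = x := by
  simp [rayExit, rayDiscrim, hx, Real.sqrt_sq hd]

lemma contDiffAt_rayExit {n : ℕ∞ω} {f g : E → E} {x : E} (hf : ContDiffAt ℝ n f x)
    (hg : ContDiffAt ℝ n g x) (hgx : g x ≠ 0) (hpos : 0 < rayDiscrim (f x) (g x)) :
    ContDiffAt ℝ n (fun y => rayExit (f y) (g y)) x := by
  have hdiscrim : ContDiffAt ℝ n (fun y => rayDiscrim (f y) (g y)) x :=
    ((hf.inner ℝ hg).pow 2).add ((hg.norm_sq ℝ).mul (contDiffAt_const.sub (hf.norm_sq ℝ)))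
  exact hf.add ((((hf.inner ℝ hg).neg.add (hdiscrim.sqrt hpos.ne')).div (hg.norm_sq ℝ)
    (by simpa using hgx)).smul hg)

lemma inner_sub_pos_of_norm_le {x y : E} (hxy : ‖y‖ ≤ ‖x‖) (hne : x ≠ y) :
    0 < inner ℝ x (x - y) := by
  have hsub : 0 < ‖x - y‖ := norm_pos_iff.2 (sub_ne_zero.2 hne)
  rw [inner_sub_right, real_inner_self_eq_norm_sq]
  nlinarith [norm_sub_sq_real x y, norm_nonneg y]

lemma rayDiscrim_sub_pos {x y : E} (hx : ‖x‖ ≤ 1) (hy : ‖y‖ ≤ 1) (hne : x ≠ y) :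
    0 < rayDiscrim x (x - y) := by
  have hsub : 0 < ‖x - y‖ := norm_pos_iff.2 (sub_ne_zero.2 hne)
  rcases hx.lt_or_eq with hlt | heq
  · have : 0 < 1 - ‖x‖ ^ 2 := by nlinarith [norm_nonneg x]
    exact add_pos_of_nonneg_of_pos (sq_nonneg _) (by positivity)
  · have := inner_sub_pos_of_norm_le (hy.trans heq.ge) hne
    simp only [rayDiscrim, heq]
    positivity

variable [FiniteDimensional ℝ E]

lemma exists_fixedPoint_of_contDiff {p : E → E} (hp : ContDiff ℝ 1 p)
    (hmaps : MapsTo p (closedBall 0 1) (closedBall 0 1)) :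
    ∃ x ∈ closedBall (0 : E) 1, p x = x := by
  by_contra! hne
  have hp_norm : ∀ x ∈ closedBall (0 : E) 1, ‖p x‖ ≤ 1 := fun x hx => by simpa using hmaps hx
  obtain ⟨x, hx, hnorm⟩ := exists_norm_ne_one_of_forall_sphere_eq
    (r := fun x => rayExit x (x - p x))
    (fun x hx => contDiffAt_rayExit contDiffAt_id (contDiffAt_id.sub hp.contDiffAt)
      (sub_ne_zero.2 (hne x hx).symm)
      (rayDiscrim_sub_pos (by simpa using hx) (hp_norm x hx) (hne x hx).symm))
    (fun x hx => by
      have hx_norm : ‖x‖ = 1 := by simpa using hx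
      have hx_mem := sphere_subset_closedBall hx
      exact rayExit_of_norm_eq_one hx_norm (inner_sub_pos_of_norm_le
        ((hp_norm x hx_mem).trans hx_norm.ge) (hne x hx_mem).symm).le)
  exact hnorm (norm_rayExit (by simpa using hx) (sub_ne_zero.2 (hne x hx).symm))

lemma exists_contDiff_forall_mem_dist_lt {F : Type*} [NormedAddCommGroup F] [NormedSpace ℝ F]
    [FiniteDimensional ℝ F] {K : Set E} (hK : IsCompact K) {f : E → F} (hf : ContinuousOn f K)
    {ε : ℝ} (hε : 0 < ε) : ∃ p : E → F, ContDiff ℝ ∞ p ∧ ∀ x ∈ K, dist (f x) (p x) < ε := by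
  obtain ⟨g, hg⟩ := ContinuousMap.exists_restrict_eq hK.isClosed
    (⟨K.domRestrict f, continuousOn_iff_continuous_domRestrict.1 hf⟩ : C(K, F))
  have hgf : ∀ x ∈ K, g x = f x := fun x hx => congrArg (fun h : C(K, F) => h ⟨x, hx⟩) hg
  have hdense := ContinuousMap.dense_setOfPred_contDiff (E := E) (F := F) g
  rw [mem_closure_iff_nhds_basis
    (nhds_basis_uniformity uniformity_basis_dist.compactConvergenceUniformity)] at hdense
  obtain ⟨p, hp, hpg⟩ := hdense (K, ε) ⟨hK, hε⟩
  refine ⟨p, hp, fun x hx => ?_⟩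
  rw [← hgf x hx, dist_comm]
  exact hpg x hx

lemma exists_contDiff_mapsTo_closedBall_forall_dist_lt {f : E → E}
    (hf : ContinuousOn f (closedBall 0 1)) (hmaps : MapsTo f (closedBall 0 1) (closedBall 0 1))
    {ε : ℝ} (hε : 0 < ε) : ∃ p : E → E, ContDiff ℝ 1 p ∧
      MapsTo p (closedBall 0 1) (closedBall 0 1) ∧
      ∀ x ∈ closedBall (0 : E) 1, dist (f x) (p x) < ε := by
  obtain ⟨p, hp, hpf⟩ := exists_contDiff_forall_mem_dist_lt (isCompact_closedBall 0 1) hf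
    (half_pos hε)
  have hp_norm : ∀ x ∈ closedBall (0 : E) 1, ‖p x‖ ≤ 1 + ε / 2 := fun x hx => by
    have hfx : ‖f x‖ ≤ 1 := by simpa using hmaps hx
    have := norm_le_norm_add_norm_sub (f x) (p x)
    rw [← dist_eq_norm] at this
    linarith [hpf x hx]
  have hle : ∀ x ∈ closedBall (0 : E) 1, ‖(1 + ε / 2)⁻¹ • p x‖ ≤ 1 := fun x hx => by
    rw [norm_smul, Real.norm_of_nonneg (by positivity), inv_mul_le_iff₀ (by positivity), mul_one]
    exact hp_norm x hx
  refine ⟨fun x => (1 + ε / 2)⁻¹ • p x, (hp.of_le (by simp)).const_smul _,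
    fun x hx => by simpa using hle x hx, fun x hx => ?_⟩
  have hscale : p x - (1 + ε / 2)⁻¹ • p x = (ε / 2) • (1 + ε / 2)⁻¹ • p x := by
    have : p x = (1 + ε / 2) • (1 + ε / 2)⁻¹ • p x := by
      rw [smul_inv_smul₀ (by positivity)]
    nth_rewrite 1 [this]
    rw [add_smul, one_smul, add_sub_cancel_left]
  calc dist (f x) ((1 + ε / 2)⁻¹ • p x)
      ≤ dist (f x) (p x) + dist (p x) ((1 + ε / 2)⁻¹ • p x) := dist_triangle _ _ _
    _ < ε / 2 + ε / 2 * 1 := by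
        refine add_lt_add_of_lt_of_le (hpf x hx) ?_
        rw [dist_eq_norm, hscale, norm_smul, Real.norm_of_nonneg (by positivity)]
        exact mul_le_mul_of_nonneg_left (hle x hx) (by positivity)
    _ = ε := by ring

/-- **Brouwer's fixed point theorem** for the closed unit ball. -/
theorem exists_fixedPoint_of_continuousOn_closedBall {f : E → E}
    (hf : ContinuousOn f (closedBall 0 1))
    (hmaps : MapsTo f (closedBall 0 1) (closedBall 0 1)) :
    ∃ x ∈ closedBall (0 : E) 1, f x = x := by
  by_contra! hne
  obtain ⟨ε, hε, hεf⟩ : ∃ ε > 0, ∀ x ∈ closedBall (0 : E) 1, ε ≤ dist (f x) x := by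
    obtain ⟨x₀, hx₀, hmin⟩ := (isCompact_closedBall (0 : E) 1).exists_isMinOn ⟨0, by simp⟩
      (continuous_dist.comp_continuousOn (hf.prodMk continuousOn_id))
    exact ⟨_, dist_pos.2 (hne x₀ hx₀), fun x hx => hmin hx⟩
  obtain ⟨p, hp, hp_maps, hpf⟩ := exists_contDiff_mapsTo_closedBall_forall_dist_lt hf hmaps hε
  obtain ⟨x, hx, hfix⟩ := exists_fixedPoint_of_contDiff hp hp_maps
  have := hpf x hx
  rw [hfix] at this
  exact (hεf x hx).not_gt this

end Brouwer

/-! ### Invariance of domain -/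

section InvarianceOfDomain

open MeasureTheory Topology

section Push

variable {E : Type*} [NormedAddCommGroup E] [NormedSpace ℝ E] {c y : E} {ε : ℝ}

/-- The map pushing the points of `ball c ε` radially onto `sphere c ε` and fixing all others. At
the center it takes the junk value `c`. -/
def pushToSphere (c : E) (ε : ℝ) (y : E) : E := c + max (ε / ‖y - c‖) 1 • (y - c)

lemma pushToSphere_of_le_dist (hy : ε ≤ dist y c) : pushToSphere c ε y = y := by
  have : ε / ‖y - c‖ ≤ 1 := div_le_one_of_le₀ (by rwa [← dist_eq_norm]) (norm_nonneg _)
  simp [pushToSphere, max_eq_right this]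

lemma pushToSphere_mem_sphere (hyc : y ≠ c) (hy : dist y c ≤ ε) :
    pushToSphere c ε y ∈ sphere c ε := by
  have hpos : 0 < ‖y - c‖ := norm_pos_iff.2 (sub_ne_zero.2 hyc)
  have hle : 1 ≤ ε / ‖y - c‖ := by rwa [one_le_div hpos, ← dist_eq_norm]
  rw [mem_sphere, pushToSphere, max_eq_left hle, dist_eq_norm, add_sub_cancel_left, norm_smul,
    Real.norm_of_nonneg (zero_le_one.trans hle), div_mul_cancel₀ _ hpos.ne']

lemma continuousOn_pushToSphere : ContinuousOn (pushToSphere c ε) {c}ᶜ := by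
  refine continuousOn_const.add (ContinuousOn.smul (ContinuousOn.sup ?_ continuousOn_const) ?_)
  · exact continuousOn_const.div (by fun_prop) fun y hy => norm_ne_zero_iff.2 (sub_ne_zero.2 hy)
  · fun_prop

end Push

variable {E : Type*} [NormedAddCommGroup E] [InnerProductSpace ℝ E] [FiniteDimensional ℝ E]

lemma exists_eq_zero_of_norm_sub_le_one {F : E → E} (hF : ContinuousOn F (closedBall 0 1))
    (hle : ∀ x ∈ closedBall (0 : E) 1, ‖x - F x‖ ≤ 1) : ∃ x ∈ closedBall (0 : E) 1, F x = 0 := by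
  obtain ⟨x, hx, hfix⟩ := exists_fixedPoint_of_continuousOn_closedBall
    (continuousOn_id.sub hF) fun x hx => by simpa using hle x hx
  exact ⟨x, hx, sub_eq_self.1 hfix⟩

lemma exists_continuous_ne_zero_dist_lt [MeasurableSpace E] [BorelSpace E] (μ : Measure E)
    [μ.IsAddHaarMeasure] {S N : Set E} (hS : IsCompact S) (hN : IsCompact N) (hμN : μ N = 0)
    {G : E → E} (hG : ContinuousOn G (S ∪ N)) (hne : ∀ y ∈ S, G y ≠ 0) {ε : ℝ} (hε : 0 < ε) :
    ∃ P : E → E, Continuous P ∧ ∀ y ∈ S ∪ N, P y ≠ 0 ∧ dist (G y) (P y) < ε := by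
  obtain ⟨δ, hδ, hδε, hδG⟩ : ∃ δ > 0, δ ≤ ε ∧ ∀ y ∈ S, δ ≤ ‖G y‖ := by
    rcases S.eq_empty_or_nonempty with rfl | hSne
    · exact ⟨ε, hε, le_rfl, by simp⟩
    · obtain ⟨y₀, hy₀, hmin⟩ := hS.exists_isMinOn hSne (hG.mono subset_union_left).norm
      exact ⟨min ‖G y₀‖ ε, lt_min (norm_pos_iff.2 (hne y₀ hy₀)) hε, min_le_right _ _,
        fun y hy => (min_le_left _ _).trans (hmin hy)⟩
  obtain ⟨P, hP, hPG⟩ := exists_contDiff_forall_mem_dist_lt (hS.union hN) hG (half_pos hδ)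
  have hnull : μ (P '' N) = 0 := addHaar_image_eq_zero_of_differentiableOn_of_addHaar_eq_zero _
    (hP.differentiable (by simp)).differentiableOn hμN
  obtain ⟨w, hw, hwP⟩ : ∃ w ∈ ball (0 : E) (δ / 2), w ∉ P '' N :=
    not_subset.1 fun h => (measure_ball_pos μ 0 (half_pos hδ)).ne' (measure_mono_null h hnull)
  rw [mem_ball_zero_iff] at hw
  have hdist : ∀ y ∈ S ∪ N, dist (G y) (P y - w) < δ := fun y hy => by
    calc dist (G y) (P y - w) ≤ dist (G y) (P y) + dist (P y) (P y - w) := dist_triangle _ _ _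
      _ < δ / 2 + δ / 2 := add_lt_add (hPG y hy) (by simpa [dist_eq_norm] using hw)
      _ = δ := add_halves δ
  refine ⟨fun y => P y - w, hP.continuous.sub continuous_const,
    fun y hy => ⟨fun h0 : P y - w = 0 => ?_, (hdist y hy).trans_le hδε⟩⟩
  rcases hy with hyS | hyN
  · have := hdist y (Or.inl hyS)
    rw [h0, dist_zero_right] at this
    exact (hδG y hyS).not_gt this
  · exact hwP ⟨y, hyN, sub_eq_zero.1 h0⟩

-- If `f` missed `c`, then following `f` by the push away from `c` and by a nonvanishing
-- perturbation of `G` would give a nonvanishing map within distance `1` of the identity.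
lemma mem_image_closedBall_of_leftInvOn {f G : E → E} (hf : ContinuousOn f (closedBall 0 1))
    (hG : Continuous G) (hGf : LeftInvOn G f (closedBall 0 1)) {c : E} {ε : ℝ}
    (hc : f 0 ∈ ball c ε) (hsmall : ∀ y ∈ closedBall c ε, ‖G y‖ ≤ 1 / 3) :
    c ∈ f '' closedBall 0 1 := by
  by_contra hcK
  borelize E
  have hε : ε ≠ 0 := (pos_of_mem_ball hc).ne'
  have hfc : ∀ x ∈ closedBall (0 : E) 1, f x ≠ c := fun x hx h => hcK ⟨x, hx, h⟩
  have hf0 : ∀ y ∈ f '' closedBall 0 1 \ ball c ε, G y ≠ 0 := by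
    rintro _ ⟨⟨x, hx, rfl⟩, hxc⟩ h0
    rw [hGf hx] at h0
    exact hxc (h0 ▸ hc)
  obtain ⟨P, hP, hPG⟩ := exists_continuous_ne_zero_dist_lt Measure.addHaar
    (((isCompact_closedBall 0 1).image_of_continuousOn hf).diff isOpen_ball)
    (isCompact_sphere c ε) (Measure.addHaar_sphere_of_ne_zero _ c hε) hG.continuousOn hf0
    (ε := 1 / 3) (by norm_num)
  have hfar : ∀ x, ε ≤ dist (f x) c → pushToSphere c ε (f x) = f x := fun x =>
    pushToSphere_of_le_dist
  have hnear : ∀ x ∈ closedBall (0 : E) 1, dist (f x) c ≤ ε →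
      pushToSphere c ε (f x) ∈ sphere c ε := fun x hx => pushToSphere_mem_sphere (hfc x hx)
  have hpush : ∀ x ∈ closedBall (0 : E) 1,
      pushToSphere c ε (f x) ∈ (f '' closedBall 0 1 \ ball c ε) ∪ sphere c ε := fun x hx => by
    rcases le_total ε (dist (f x) c) with h | h
    · rw [hfar x h]
      exact Or.inl ⟨mem_image_of_mem f hx, by simpa using h⟩
    · exact Or.inr (hnear x hx h)
  obtain ⟨x, hx, hzero⟩ := exists_eq_zero_of_norm_sub_le_one
    (F := fun x => P (pushToSphere c ε (f x)))
    (hP.comp_continuousOn (continuousOn_pushToSphere.comp hf hfc)) fun x hx => by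
      have hclose := (hPG _ (hpush x hx)).2
      rw [← dist_eq_norm]
      rcases le_total ε (dist (f x) c) with h | h
      · rw [hfar x h, hGf hx] at hclose
        rw [hfar x h]
        linarith
      · have hx_small := hsmall _ (mem_closedBall.2 h)
        have hpush_small := hsmall _ (sphere_subset_closedBall (hnear x hx h))
        rw [hGf hx] at hx_small
        have := dist_triangle x (G (pushToSphere c ε (f x))) (P (pushToSphere c ε (f x)))
        linarith [dist_le_norm_add_norm x (G (pushToSphere c ε (f x)))]
  exact (hPG _ (hpush x hx)).1 hzero

lemma mem_interior_image_closedBall {f : E → E} (hf : ContinuousOn f (closedBall 0 1))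
    (hinj : InjOn f (closedBall 0 1)) : f 0 ∈ interior (f '' closedBall 0 1) := by
  obtain ⟨G, hGf⟩ : ∃ G : C(E, E), LeftInvOn G f (closedBall 0 1) := by
    have : CompactSpace (closedBall (0 : E) 1) :=
      isCompact_iff_compactSpace.1 (isCompact_closedBall _ _)
    obtain ⟨G, hG⟩ := ContinuousMap.exists_extension
      ((continuousOn_iff_continuous_domRestrict.1 hf).isClosedEmbedding
        (injOn_iff_injective.1 hinj))
      (⟨Subtype.val, continuous_subtype_val⟩ : C(closedBall (0 : E) 1, E))
    exact ⟨G, fun x hx => congrArg (fun h : C(closedBall (0 : E) 1, E) => h ⟨x, hx⟩) hG⟩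
  have hG0 : G (f 0) = 0 := hGf (by simp)
  obtain ⟨η, hη, hGη⟩ :=
    Metric.continuousAt_iff.1 (G.continuous.continuousAt (x := f 0)) (1 / 3) (by norm_num)
  rw [hG0] at hGη
  rw [mem_interior_iff_mem_nhds]
  filter_upwards [ball_mem_nhds (f 0) (half_pos hη)] with c hc
  refine mem_image_closedBall_of_leftInvOn hf G.continuous hGf (mem_ball_comm.1 hc)
    fun y hy => ?_
  rw [← dist_zero_right]
  refine (hGη ((dist_triangle y c (f 0)).trans_lt ?_)).le
  linarith [mem_closedBall.1 hy, mem_ball.1 hc]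

/-- **Invariance of domain** for Euclidean spaces. -/
theorem isOpen_image_of_continuousOn_injOn {f : E → E} {U : Set E} (hU : IsOpen U)
    (hf : ContinuousOn f U) (hinj : InjOn f U) : IsOpen (f '' U) := by
  rw [isOpen_iff_mem_nhds]
  rintro _ ⟨x, hx, rfl⟩
  obtain ⟨r, hr, hrU⟩ := Metric.nhds_basis_closedBall.mem_iff.1 (hU.mem_nhds hx)
  have hmaps : MapsTo (fun y : E => x + r • y) (closedBall 0 1) U := fun y hy => by
    rw [mem_closedBall_zero_iff] at hy
    refine hrU ?_
    simpa [norm_smul, abs_of_pos hr] using mul_le_of_le_one_right hr.le hy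
  have hmem := mem_interior_image_closedBall (f := fun y => f (x + r • y))
    (hf.comp (by fun_prop) hmaps) fun y hy z hz hyz => by
      simpa [hr.ne'] using hinj (hmaps hy) (hmaps hz) hyz
  simp only [smul_zero, add_zero] at hmem
  filter_upwards [mem_interior_iff_mem_nhds.1 hmem]
  rintro _ ⟨y, hy, rfl⟩
  exact mem_image_of_mem f (hmaps hy)

end InvarianceOfDomain

lemma isOpen_image_of_continuousOn_injOn_chartedSpace (E : Type*) [NormedAddCommGroup E]
    [InnerProductSpace ℝ E] [FiniteDimensional ℝ E] {M N : Type*} [TopologicalSpace M]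
    [ChartedSpace E M] [TopologicalSpace N] [ChartedSpace E N] {f : M → N}
    {W : Set M} (hW : IsOpen W) (hf : ContinuousOn f W) (hinj : InjOn f W) : IsOpen (f '' W) := by
  rw [isOpen_iff_mem_nhds]
  rintro _ ⟨w, hw, rfl⟩
  set c := chartAt E w
  set d := chartAt E (f w)
  set V := c.target ∩ c.symm ⁻¹' (W ∩ f ⁻¹' d.source)
  have hV : IsOpen V := c.isOpen_inter_preimage_symm (hf.isOpen_inter_preimage hW d.open_source)
  have hVW : MapsTo c.symm V W := fun x hx => hx.2.1
  have hVd : MapsTo (f ∘ c.symm) V d.source := fun x hx => hx.2.2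
  have hfc : ContinuousOn (f ∘ c.symm) V :=
    hf.comp (c.continuousOn_symm.mono inter_subset_left) hVW
  have hfc_inj : InjOn (f ∘ c.symm) V := hinj.comp (c.symm.injOn.mono inter_subset_left) hVW
  have hopen : IsOpen (d ∘ f ∘ c.symm '' V) :=
    isOpen_image_of_continuousOn_injOn hV (d.continuousOn.comp hfc hVd)
      (d.injOn.comp hfc_inj hVd)
  have himage : f ∘ c.symm '' V = d.symm '' (d ∘ f ∘ c.symm '' V) := by
    rw [image_image]
    exact image_congr fun x hx => (d.left_inv (hVd hx)).symm
  have hfV : IsOpen (f ∘ c.symm '' V) := by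
    rw [himage]
    refine d.isOpen_image_symm_of_subset_target hopen ?_
    rintro _ ⟨x, hx, rfl⟩
    exact d.map_source (hVd hx)
  have hcw : c.symm (c w) = w := c.left_inv (mem_chart_source E w)
  refine Filter.mem_of_superset
    (hfV.mem_nhds ⟨c w, ⟨mem_chart_target E w, ?_⟩, congrArg f hcw⟩) ?_
  · simpa only [mem_preimage, hcw] using ⟨hw, mem_chart_source E (f w)⟩
  · rw [image_comp]
    exact image_mono hVW.image_subset

lemma surjective_of_continuous_of_injective (E : Type*) [NormedAddCommGroup E]
    [InnerProductSpace ℝ E] [FiniteDimensional ℝ E] {M N : Type*} [TopologicalSpace M]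
    [ChartedSpace E M] [TopologicalSpace N] [ChartedSpace E N] [CompactSpace M]
    [Nonempty M] [T2Space N] [PreconnectedSpace N] {f : M → N} (hf : Continuous f)
    (hinj : Function.Injective f) :
    Function.Surjective f := by
  have hopen : IsOpen (range f) := image_univ (f := f) ▸
    isOpen_image_of_continuousOn_injOn_chartedSpace E isOpen_univ hf.continuousOn hinj.injOn
  exact range_eq_univ.1 (IsClopen.eq_univ ⟨(isCompact_range hf).isClosed, hopen⟩
    (range_nonempty f))

/-! ### Crumpled cubes and their complements -/

section ConnectedComponentIn

variable {α : Type*} [TopologicalSpace α] {F : Set α} {x : α}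

lemma exists_isOpen_connectedComponentIn_eq_inter [LocallyConnectedSpace F] (hx : x ∈ F) :
    ∃ O, IsOpen O ∧ connectedComponentIn F x = F ∩ O := by
  obtain ⟨O, hO, hOx⟩ := isOpen_induced_iff.1 (isOpen_connectedComponent (x := (⟨x, hx⟩ : F)))
  exact ⟨O, hO, by rw [connectedComponentIn_eq_image hx, ← hOx, Subtype.image_preimage_coe]⟩

lemma exists_isClosed_connectedComponentIn_eq_inter (hx : x ∈ F) :
    ∃ Z, IsClosed Z ∧ connectedComponentIn F x = F ∩ Z := by
  obtain ⟨Z, hZ, hZx⟩ := isClosed_induced_iff.1 (isClosed_connectedComponent (x := (⟨x, hx⟩ : F)))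
  exact ⟨Z, hZ, by rw [connectedComponentIn_eq_image hx, ← hZx, Subtype.image_preimage_coe]⟩

lemma eq_connectedComponentIn_of_isOpen_of_isClosed {V O Z : Set α}
    (hV : IsPreconnected V) (hx : x ∈ V) (hO : IsOpen O) (hZ : IsClosed Z) (hVO : V = F ∩ O)
    (hVZ : V = F ∩ Z) : V = connectedComponentIn F x := by
  have hVF : V ⊆ F := hVO ▸ inter_subset_left
  refine (hV.subset_connectedComponentIn hx hVF).antisymm fun y hy => ?_
  have hyF := connectedComponentIn_subset F x
  by_contra hyV
  obtain ⟨z, hz, hzO, hzZ⟩ := isPreconnected_connectedComponentIn O Zᶜ hO hZ.isOpen_compl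
    (fun z hz => or_iff_not_imp_left.2 fun hzO hzZ =>
      hzO (hVO ▸ (hVZ ▸ ⟨hyF hz, hzZ⟩ : z ∈ V) : z ∈ F ∩ O).2)
    ⟨x, mem_connectedComponentIn (hVF hx), (hVO ▸ hx : x ∈ F ∩ O).2⟩
    ⟨y, hy, fun hyZ => hyV (hVZ ▸ ⟨hyF hy, hyZ⟩)⟩
  exact hzZ (hVZ ▸ (hVO ▸ ⟨hyF hz, hzO⟩ : z ∈ V) : z ∈ F ∩ Z).2

end ConnectedComponentIn

lemma exists_continuous_extension_of_homeomorph_closedBall {α : Type*} [TopologicalSpace α]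
    [NormalSpace α] {n : ℕ} {K : Set α} (hK : IsClosed K)
    (H : ↥K ≃ₜ ↥(closedBall (0 : EuclideanSpace ℝ (Fin n)) 1)) :
    ∃ (φ : α → EuclideanSpace ℝ (Fin n)) (ψ : EuclideanSpace ℝ (Fin n) → α),
      Continuous φ ∧ Continuous ψ ∧ (∀ v, ψ v ∈ K) ∧ (∀ y ∈ K, ψ (φ y) = y) ∧
        (∀ v, ‖v‖ ≤ 1 → φ (ψ v) = v) ∧ ∀ y ∈ K, ‖φ y‖ ≤ 1 := by
  obtain ⟨φ, hφ⟩ := ContinuousMap.exists_restrict_eq hK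
    (⟨fun y => (H y : EuclideanSpace ℝ (Fin n)), by fun_prop⟩ : C(↥K, _))
  have hφH : ∀ y : ↥K, φ y = H y := fun y => congrArg (fun h : C(↥K, _) => h y) hφ
  have hφ_le : ∀ y ∈ K, ‖φ y‖ ≤ 1 := fun y hy =>
    hφH ⟨y, hy⟩ ▸ mem_closedBall_zero_iff.1 (H ⟨y, hy⟩).2
  let clamp : EuclideanSpace ℝ (Fin n) → EuclideanSpace ℝ (Fin n) := fun v =>
    (max ‖v‖ 1)⁻¹ • v
  have hclamp_le : ∀ v, clamp v ∈ closedBall 0 1 := fun v => by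
    rw [mem_closedBall_zero_iff, norm_smul, norm_inv, Real.norm_of_nonneg (by positivity),
      inv_mul_le_one₀ (by positivity)]
    exact le_max_left _ _
  have hclamp_eq : ∀ v, ‖v‖ ≤ 1 → clamp v = v := fun v hv => by
    simp only [clamp, max_eq_right hv, inv_one, one_smul]
  have hclamp : Continuous clamp :=
    ((continuous_norm.max continuous_const).inv₀ fun v => by positivity).smul continuous_id
  refine ⟨φ, fun v => H.symm ⟨clamp v, hclamp_le v⟩, φ.continuous,
    continuous_subtype_val.comp (H.symm.continuous.comp (hclamp.subtype_mk _)),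
    fun v => (H.symm _).2, fun y hy => ?_, fun v hv => ?_, hφ_le⟩
  · have hφy : (⟨clamp (φ y), hclamp_le _⟩ : ↥(closedBall _ _)) = H ⟨y, hy⟩ :=
      Subtype.ext ((hclamp_eq _ (hφ_le y hy)).trans (hφH ⟨y, hy⟩))
    simp only [hφy, H.symm_apply_apply]
  · rw [hφH, H.apply_symm_apply]
    exact hclamp_eq v hv

namespace Sph

variable (n : ℕ)

instance : ChartedSpace (EuclideanSpace ℝ (Fin n)) ↥(Sph n) :=
  inferInstanceAs (ChartedSpace (EuclideanSpace ℝ (Fin n)) (sphere (0 : Amb n) 1))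

instance : CompactSpace ↥(Sph n) := isCompact_iff_compactSpace.1 (isCompact_sphere 0 1)

instance : LocallyConnectedSpace ↥(Sph n) :=
  ChartedSpace.locallyConnectedSpace (EuclideanSpace ℝ (Fin n)) ↥(Sph n)

instance : Nonempty ↥(Sph n) := (NormedSpace.sphere_nonempty.2 zero_le_one).to_subtype

variable {n}

lemma preconnectedSpace (hn : 1 ≤ n) : PreconnectedSpace ↥(Sph n) := by
  refine isPreconnected_iff_preconnectedSpace.1 (isPreconnected_sphere ?_ 0 1)
  rw [← Module.finrank_eq_rank, finrank_euclideanSpace_fin]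
  exact_mod_cast Nat.lt_succ_of_le hn

lemma locallyConnectedSpace_sdiff {B : Set (Amb n)} (hB : IsClosed B) :
    LocallyConnectedSpace ↥(Sph n \ B) := by
  have hopen : IsOpen (Subtype.val ⁻¹' (Sph n \ B) : Set ↥(Sph n)) := by
    simpa only [sdiff_eq, preimage_inter, Subtype.coe_preimage_self, univ_inter] using
      hB.isOpen_compl.preimage continuous_subtype_val
  exact (Topology.IsOpenEmbedding.inclusion sdiff_subset hopen).locallyConnectedSpace

end Sph

namespace CrumpledCube

variable {n : ℕ} (C : CrumpledCube n)

lemma isCompact_bd : IsCompact C.bd := by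
  obtain ⟨e, he, -, hr⟩ := C.exists_embedding
  exact hr ▸ isCompact_range he

lemma int_subset_sphere_sdiff_bd : C.int ⊆ Sph n \ C.bd := by
  obtain ⟨x, -, h⟩ := C.int_component
  exact h ▸ connectedComponentIn_subset _ _

lemma int_subset_sphere : C.int ⊆ Sph n := fun _ hx => (C.int_subset_sphere_sdiff_bd hx).1

lemma carrier_subset_sphere : C.carrier ⊆ Sph n :=
  union_subset C.bd_subset_sphere C.int_subset_sphere

lemma notMem_bd_of_mem_int {x : Amb n} (hx : x ∈ C.int) : x ∉ C.bd :=
  (C.int_subset_sphere_sdiff_bd hx).2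

lemma isConnected_int : IsConnected C.int := by
  obtain ⟨x, hx, h⟩ := C.int_component
  exact h ▸ isConnected_connectedComponentIn_iff.2 hx

/-- The complement `S^n \ Int C` of the interior of a crumpled cube, which contains `Bd C`. -/
def compl : Set (Amb n) := Sph n \ C.int

lemma bd_subset_compl : C.bd ⊆ C.compl := fun _ hx =>
  ⟨C.bd_subset_sphere hx, fun h => C.notMem_bd_of_mem_int h hx⟩

lemma isClosed_compl : IsClosed C.compl := by
  obtain ⟨x, hx, h⟩ := C.int_component
  have := Sph.locallyConnectedSpace_sdiff C.isCompact_bd.isClosed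
  obtain ⟨O, hO, hOx⟩ := exists_isOpen_connectedComponentIn_eq_inter hx
  have hcompl : C.compl = C.bd ∪ Sph n ∩ Oᶜ := by
    ext y
    have := @C.bd_subset_sphere y
    simp only [compl, h, hOx, mem_sdiff, mem_inter_iff, mem_union, mem_compl_iff]
    tauto
  exact hcompl ▸ C.isCompact_bd.isClosed.union (isClosed_sphere.inter hO.isClosed_compl)

lemma isClosed_carrier : IsClosed C.carrier := by
  obtain ⟨x, hx, h⟩ := C.int_component
  obtain ⟨Z, hZ, hZx⟩ := exists_isClosed_connectedComponentIn_eq_inter hx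
  have hcarrier : C.carrier = C.bd ∪ Sph n ∩ Z := by
    ext y
    simp only [carrier, h, hZx, mem_sdiff, mem_inter_iff, mem_union]
    tauto
  exact hcarrier ▸ C.isCompact_bd.isClosed.union (isClosed_sphere.inter hZ)

lemma closure_int_subset_carrier : closure C.int ⊆ C.carrier :=
  closure_minimal subset_union_right C.isClosed_carrier

lemma carrier_union_compl : C.carrier ∪ C.compl = Sph n := by
  rw [carrier, compl, union_assoc, union_sdiff_cancel C.int_subset_sphere,
    union_eq_right.2 C.bd_subset_sphere]

lemma carrier_inter_compl : C.carrier ∩ C.compl = C.bd :=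
  Subset.antisymm (fun _ h => h.1.resolve_right h.2.2)
    (subset_inter C.bd_subset_carrier C.bd_subset_compl)

/-- A parametrization of the complement of a crumpled cube by the closed unit ball, taking the
unit sphere to the boundary. The parametrization and its inverse are extended to the ambient
Euclidean spaces so that they can be composed freely. -/
structure ComplChart where
  toBall : Amb n → EuclideanSpace ℝ (Fin n)
  ofBall : EuclideanSpace ℝ (Fin n) → Amb n
  continuous_toBall : Continuous toBall
  continuous_ofBall : Continuous ofBall
  ofBall_mem : ∀ v, ofBall v ∈ C.compl
  ofBall_toBall : ∀ y ∈ C.compl, ofBall (toBall y) = y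
  toBall_ofBall : ∀ v, ‖v‖ ≤ 1 → toBall (ofBall v) = v
  norm_toBall_le : ∀ y ∈ C.compl, ‖toBall y‖ ≤ 1
  norm_toBall_eq_one_iff : ∀ y ∈ C.compl, ‖toBall y‖ = 1 ↔ y ∈ C.bd

variable {C}

lemma mem_closure_int_of_norm_eq_one {φ : Amb n → EuclideanSpace ℝ (Fin n)}
    (hφ : ContinuousOn φ C.compl) (hinj : InjOn φ C.compl) (hle : ∀ y ∈ C.compl, ‖φ y‖ ≤ 1)
    {y : Amb n} (hy : y ∈ C.compl) (hφy : ‖φ y‖ = 1) : y ∈ closure C.int := by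
  by_contra hcl
  set W : Set ↥(Sph n) := Subtype.val ⁻¹' (closure C.int)ᶜ
  have hWK : MapsTo Subtype.val W C.compl := fun w hw => ⟨w.2, fun h => hw (subset_closure h)⟩
  have hopen : IsOpen (φ ∘ Subtype.val '' W) :=
    isOpen_image_of_continuousOn_injOn_chartedSpace (EuclideanSpace ℝ (Fin n))
      (isClosed_closure.isOpen_compl.preimage continuous_subtype_val)
      (hφ.comp continuous_subtype_val.continuousOn hWK)
      (hinj.comp Subtype.val_injective.injOn hWK)
  have hball : φ ∘ Subtype.val '' W ⊆ closedBall 0 1 := by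
    rintro _ ⟨w, hw, rfl⟩
    exact mem_closedBall_zero_iff.2 (hle w (hWK hw))
  have hmem : φ y ∈ interior (closedBall (0 : EuclideanSpace ℝ (Fin n)) 1) :=
    interior_maximal hball hopen ⟨⟨y, hy.1⟩, hcl, rfl⟩
  rw [interior_closedBall _ one_ne_zero] at hmem
  exact (mem_ball_zero_iff.1 hmem).ne hφy

lemma surjOn_sphere_bd (hn : 2 ≤ n) {ψ : EuclideanSpace ℝ (Fin n) → Amb n}
    (hψ : ContinuousOn ψ (sphere 0 1)) (hinj : InjOn ψ (sphere 0 1))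
    (hmaps : MapsTo ψ (sphere 0 1) C.bd) : SurjOn ψ (sphere 0 1) C.bd := by
  obtain ⟨m, rfl⟩ : ∃ m, n = m + 1 := ⟨n - 1, by omega⟩
  obtain ⟨e, he, he_inj, hr⟩ : ∃ e : ↥(Sph m) → Amb (m + 1), Continuous e ∧
    Function.Injective e ∧ range e = C.bd := C.exists_embedding
  let eh : ↥(Sph m) ≃ₜ ↥(range e) := (he.isClosedEmbedding he_inj).isEmbedding.toHomeomorph
  have hmem : ∀ u : ↥(Sph m), ψ u ∈ range e := fun u => hr ▸ hmaps u.2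
  let k : ↥(Sph m) → ↥(Sph m) := fun u => eh.symm ⟨ψ u, hmem u⟩
  have hek : ∀ u, e (k u) = ψ u := fun u =>
    congrArg Subtype.val (eh.apply_symm_apply ⟨ψ u, hmem u⟩)
  have hk : Continuous k := eh.symm.continuous.comp (hψ.domRestrict.subtype_mk _)
  have hk_inj : Function.Injective k := fun a b hab =>
    Subtype.ext (hinj a.2 b.2 (by rw [← hek, ← hek, hab]))
  have := Sph.preconnectedSpace (show 1 ≤ m by omega)
  intro y hy
  obtain ⟨p, rfl⟩ := hr.symm ▸ hy
  obtain ⟨u, rfl⟩ := surjective_of_continuous_of_injective (EuclideanSpace ℝ (Fin m)) hk hk_inj p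
  exact ⟨u, u.2, (hek u).symm⟩

lemma _root_.IsClosedCellComplement.nonempty_complChart (hn : 2 ≤ n)
    (hC : IsClosedCellComplement C) : Nonempty C.ComplChart := by
  obtain ⟨H⟩ := hC
  obtain ⟨φ, ψ, hφ, hψ, hψ_mem, hψφ, hφψ, hφ_le⟩ :=
    exists_continuous_extension_of_homeomorph_closedBall C.isClosed_compl H
  have hφ_inj : InjOn φ C.compl := LeftInvOn.injOn hψφ
  have hψ_inj : InjOn ψ (sphere 0 1) :=
    LeftInvOn.injOn (f₁' := φ) fun v hv => hφψ v (mem_sphere_zero_iff_norm.1 hv).le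
  have hbd : ∀ y ∈ C.compl, ‖φ y‖ = 1 → y ∈ C.bd := fun y hy hφy =>
    C.carrier_inter_compl.subset ⟨C.closure_int_subset_carrier
      (mem_closure_int_of_norm_eq_one hφ.continuousOn hφ_inj hφ_le hy hφy), hy⟩
  have hψ_bd : MapsTo ψ (sphere 0 1) C.bd := fun v hv => by
    have hv' := mem_sphere_zero_iff_norm.1 hv
    exact hbd _ (hψ_mem v) (by rw [hφψ v hv'.le, hv'])
  refine ⟨⟨φ, ψ, hφ, hψ, hψ_mem, hψφ, hφψ, hφ_le, fun y hy => ⟨hbd y hy, fun hyb => ?_⟩⟩⟩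
  obtain ⟨v, hv, rfl⟩ := surjOn_sphere_bd hn hψ.continuousOn hψ_inj hψ_bd hyb
  rw [hφψ v (mem_sphere_zero_iff_norm.1 hv).le, mem_sphere_zero_iff_norm.1 hv]

lemma ComplChart.bd_subset_closure_int (χ : C.ComplChart) : C.bd ⊆ closure C.int := fun y hy =>
  have hyK := C.bd_subset_compl hy
  mem_closure_int_of_norm_eq_one χ.continuous_toBall.continuousOn
    (LeftInvOn.injOn χ.ofBall_toBall) χ.norm_toBall_le hyK ((χ.norm_toBall_eq_one_iff y hyK).2 hy)

end CrumpledCube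

/-! ### Flattenings -/

section Unitize

variable {E : Type*} [NormedAddCommGroup E] [NormedSpace ℝ E] {v : E}

/-- Radial projection to the unit sphere, truncated on the ball of radius `1 / 2` so as to be
continuous at the origin. -/
def unitize (v : E) : E := (max ‖v‖ (1 / 2))⁻¹ • v

lemma continuous_unitize : Continuous (unitize : E → E) :=
  ((continuous_norm.max continuous_const).inv₀ fun _ =>
    (lt_max_of_lt_right one_half_pos).ne').smul continuous_id

lemma norm_unitize (hv : 1 / 2 ≤ ‖v‖) : ‖unitize v‖ = 1 := by
  rw [unitize, max_eq_left hv, norm_smul, norm_inv, norm_norm, inv_mul_cancel₀]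
  exact (one_half_pos.trans_le hv).ne'

lemma norm_smul_unitize (hv : 1 / 2 ≤ ‖v‖) : ‖v‖ • unitize v = v := by
  rw [unitize, max_eq_left hv, smul_inv_smul₀ (one_half_pos.trans_le hv).ne']

lemma unitize_smul (hv : ‖v‖ = 1) {s : ℝ} (hs : 1 / 2 ≤ s) : unitize (s • v) = v := by
  have h0 : 0 < s := one_half_pos.trans_le hs
  rw [unitize, norm_smul, hv, mul_one, Real.norm_of_nonneg h0.le, max_eq_left hs,
    inv_smul_smul₀ h0.ne']

lemma unitize_of_norm_eq_one (hv : ‖v‖ = 1) : unitize v = v := by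
  simpa only [one_smul] using unitize_smul hv one_half_lt_one.le

end Unitize

section Depth

variable {n : ℕ} {X : Set (Amb n)} {x : Amb n}

/-- Half the distance to `X ∪ {0}`, the depth to which the boundary of a crumpled cube is pushed
at `x`. Adjoining the origin makes this positive off `X` even when `X` is empty. -/
def depth (X : Set (Amb n)) (x : Amb n) : ℝ := infDist x (insert 0 X) / 2

lemma continuous_depth : Continuous (depth X) := (continuous_infDist_pt _).div_const _

lemma depth_nonneg (x : Amb n) : 0 ≤ depth X x := div_nonneg infDist_nonneg zero_le_two

lemma depth_le_half (hx : x ∈ Sph n) : depth X x ≤ 1 / 2 := by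
  refine div_le_div_of_nonneg_right ?_ zero_le_two
  exact (infDist_le_dist_of_mem (mem_insert 0 X)).trans_eq (mem_sphere.1 hx)

lemma depth_of_mem (hx : x ∈ X) : depth X x = 0 := by
  rw [depth, infDist_zero_of_mem (mem_insert_of_mem 0 hx), zero_div]

lemma depth_pos (hX : IsClosed X) (hx : x ∈ Sph n) (hxX : x ∉ X) : 0 < depth X x := by
  have hcl : IsClosed (insert 0 X) := insert_eq 0 X ▸ isClosed_singleton.union hX
  refine div_pos ((hcl.notMem_iff_infDist_pos (insert_nonempty _ _)).1 ?_) two_pos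
  rintro (rfl | h)
  · simp [Sph] at hx
  · exact hxX h

end Depth

namespace CrumpledCube.ComplChart

variable {n : ℕ} {C : CrumpledCube n} (χ : C.ComplChart) {X : Set (Amb n)} {x y : Amb n} {h : ℝ}

/-- The radial projection of the complementary cell onto its boundary, meaningful at points of
height at most `1 / 2`. -/
def proj (y : Amb n) : Amb n := χ.ofBall (unitize (χ.toBall y))

/-- The radial distance in the complementary cell from its boundary. -/
def height (y : Amb n) : ℝ := 1 - ‖χ.toBall y‖

/-- The point of the complementary cell at height `h` on the radius ending at `x`. -/
def slide (x : Amb n) (h : ℝ) : Amb n := χ.ofBall ((1 - h) • χ.toBall x)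

lemma continuous_proj : Continuous χ.proj :=
  χ.continuous_ofBall.comp (continuous_unitize.comp χ.continuous_toBall)

lemma continuous_height : Continuous χ.height := continuous_const.sub χ.continuous_toBall.norm

lemma continuous_slide : Continuous fun p : Amb n × ℝ => χ.slide p.1 p.2 :=
  χ.continuous_ofBall.comp
    ((continuous_const.sub continuous_snd).smul (χ.continuous_toBall.comp continuous_fst))

lemma slide_mem_compl (x : Amb n) (h : ℝ) : χ.slide x h ∈ C.compl := χ.ofBall_mem _

lemma proj_mem_sphere (y : Amb n) : χ.proj y ∈ Sph n := (χ.ofBall_mem _).1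

lemma slide_zero (hx : x ∈ C.compl) : χ.slide x 0 = x := by
  rw [slide, sub_zero, one_smul, χ.ofBall_toBall x hx]

lemma height_nonneg (hy : y ∈ C.compl) : 0 ≤ χ.height y := sub_nonneg.2 (χ.norm_toBall_le y hy)

lemma height_eq_zero_iff (hy : y ∈ C.compl) : χ.height y = 0 ↔ y ∈ C.bd := by
  rw [height, sub_eq_zero, eq_comm, χ.norm_toBall_eq_one_iff y hy]

lemma height_of_mem_bd (hy : y ∈ C.bd) : χ.height y = 0 :=
  (χ.height_eq_zero_iff (C.bd_subset_compl hy)).2 hy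

lemma height_pos (hy : y ∈ C.compl) (hyb : y ∉ C.bd) : 0 < χ.height y :=
  (χ.height_nonneg hy).lt_of_ne' (mt (χ.height_eq_zero_iff hy).1 hyb)

lemma norm_toBall_of_mem_bd (hx : x ∈ C.bd) : ‖χ.toBall x‖ = 1 :=
  (χ.norm_toBall_eq_one_iff x (C.bd_subset_compl hx)).2 hx

lemma toBall_slide (hx : x ∈ C.bd) (h₀ : 0 ≤ h) (h₁ : h ≤ 1 / 2) :
    χ.toBall (χ.slide x h) = (1 - h) • χ.toBall x := by
  refine χ.toBall_ofBall _ ?_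
  rw [norm_smul, χ.norm_toBall_of_mem_bd hx, mul_one, Real.norm_of_nonneg (by linarith)]
  linarith

lemma height_slide (hx : x ∈ C.bd) (h₀ : 0 ≤ h) (h₁ : h ≤ 1 / 2) :
    χ.height (χ.slide x h) = h := by
  rw [height, χ.toBall_slide hx h₀ h₁, norm_smul, χ.norm_toBall_of_mem_bd hx, mul_one,
    Real.norm_of_nonneg (by linarith), sub_sub_cancel]

lemma proj_slide (hx : x ∈ C.bd) (h₀ : 0 ≤ h) (h₁ : h ≤ 1 / 2) : χ.proj (χ.slide x h) = x := by
  rw [proj, χ.toBall_slide hx h₀ h₁, unitize_smul (χ.norm_toBall_of_mem_bd hx) (by linarith),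
    χ.ofBall_toBall x (C.bd_subset_compl hx)]

lemma proj_of_mem_bd (hx : x ∈ C.bd) : χ.proj x = x := by
  simpa only [χ.slide_zero (C.bd_subset_compl hx)] using
    χ.proj_slide hx le_rfl one_half_pos.le

lemma half_le_norm_toBall (hy : χ.height y ≤ 1 / 2) : 1 / 2 ≤ ‖χ.toBall y‖ := by
  rw [height] at hy
  linarith

lemma proj_mem_bd (hy : χ.height y ≤ 1 / 2) : χ.proj y ∈ C.bd := by
  have hunit := norm_unitize (χ.half_le_norm_toBall hy)
  rw [proj, ← χ.norm_toBall_eq_one_iff _ (χ.ofBall_mem _), χ.toBall_ofBall _ hunit.le, hunit]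

lemma slide_proj_height (hy : y ∈ C.compl) (hy' : χ.height y ≤ 1 / 2) :
    χ.slide (χ.proj y) (χ.height y) = y := by
  have hhalf := χ.half_le_norm_toBall hy'
  rw [slide, proj, χ.toBall_ofBall _ (norm_unitize hhalf).le, height, sub_sub_cancel,
    norm_smul_unitize hhalf, χ.ofBall_toBall y hy]

lemma depth_proj_le_half (y : Amb n) : depth X (χ.proj y) ≤ 1 / 2 :=
  depth_le_half (χ.proj_mem_sphere y)

lemma continuous_depth_proj : Continuous fun y => depth X (χ.proj y) :=
  continuous_depth.comp χ.continuous_proj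

lemma depth_proj_slide (hx : x ∈ C.bd) (h₀ : 0 ≤ h) (h₁ : h ≤ depth X x) :
    depth X (χ.proj (χ.slide x h)) = depth X x := by
  rw [χ.proj_slide hx h₀ (h₁.trans (depth_le_half (C.bd_subset_sphere hx)))]

lemma continuous_slide_proj_one_sub_mul {g : Amb n → ℝ} (hg : Continuous g) :
    Continuous fun p : Amb n × ℝ => χ.slide (χ.proj p.1) ((1 - p.2) * g p.1) :=
  χ.continuous_slide.comp ((χ.continuous_proj.comp continuous_fst).prodMk
    ((continuous_const.sub continuous_snd).mul (hg.comp continuous_fst)))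

/-- The graph of `depth X` over `Bd C` in the radial coordinates of the complementary cell, which
is the boundary of the flattening relative to `X`. -/
def flatBd (X : Set (Amb n)) : Set (Amb n) :=
  {y | y ∈ C.compl ∧ χ.height y = depth X (χ.proj y)}

/-- The points of the sphere above the graph of `depth X`, on the side of `Int C`, which form the
interior of the flattening relative to `X`. -/
def flatInt (X : Set (Amb n)) : Set (Amb n) :=
  C.int ∪ {y | y ∈ C.compl ∧ χ.height y < depth X (χ.proj y)}

lemma slide_mem_flatInt (hx : x ∈ C.bd) (h₀ : 0 ≤ h) (h₁ : h < depth X x) :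
    χ.slide x h ∈ χ.flatInt X := by
  refine Or.inr ⟨χ.slide_mem_compl x h, ?_⟩
  rwa [χ.depth_proj_slide hx h₀ h₁.le,
    χ.height_slide hx h₀ (h₁.le.trans (depth_le_half (C.bd_subset_sphere hx)))]

lemma slide_depth_mem_flatBd (hx : x ∈ C.bd) : χ.slide x (depth X x) ∈ χ.flatBd X := by
  refine ⟨χ.slide_mem_compl _ _, ?_⟩
  rw [χ.depth_proj_slide hx (depth_nonneg x) le_rfl,
    χ.height_slide hx (depth_nonneg x) (depth_le_half (C.bd_subset_sphere hx))]

lemma proj_slide_depth (hx : x ∈ C.bd) : χ.proj (χ.slide x (depth X x)) = x :=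
  χ.proj_slide hx (depth_nonneg x) (depth_le_half (C.bd_subset_sphere hx))

lemma proj_mem_bd_of_height_le_depth (hy : χ.height y ≤ depth X (χ.proj y)) : χ.proj y ∈ C.bd :=
  χ.proj_mem_bd (hy.trans (χ.depth_proj_le_half y))

lemma slide_depth_proj (hy : y ∈ χ.flatBd X) :
    χ.slide (χ.proj y) (depth X (χ.proj y)) = y := by
  rw [← hy.2, χ.slide_proj_height hy.1 (hy.2.trans_le (χ.depth_proj_le_half y))]

lemma continuous_slide_depth : Continuous fun x => χ.slide x (depth X x) :=
  χ.continuous_slide.comp (continuous_id.prodMk continuous_depth)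

/-- The homeomorphism from the boundary of a crumpled cube to the boundary of its flattening which
slides each point along its radius of the complementary cell. -/
def flatHomeo (X : Set (Amb n)) : ↥C.bd ≃ₜ ↥(χ.flatBd X) where
  toFun x := ⟨χ.slide x (depth X x), χ.slide_depth_mem_flatBd x.2⟩
  invFun y := ⟨χ.proj y, χ.proj_mem_bd_of_height_le_depth y.2.2.le⟩
  left_inv x := Subtype.ext (χ.proj_slide_depth x.2)
  right_inv y := Subtype.ext (χ.slide_depth_proj y.2)
  continuous_toFun := (χ.continuous_slide_depth.comp continuous_subtype_val).subtype_mk _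
  continuous_invFun := (χ.continuous_proj.comp continuous_subtype_val).subtype_mk _

lemma isPreconnected_flatInt : IsPreconnected (χ.flatInt X) := by
  obtain ⟨x₀, hx₀⟩ := C.isConnected_int.nonempty
  refine isPreconnected_of_forall x₀ ?_
  rintro y (hy | ⟨hyK, hy⟩)
  · exact ⟨C.int, subset_union_left, hx₀, hy, C.isConnected_int.isPreconnected⟩
  have hb := χ.proj_mem_bd_of_height_le_depth hy.le
  set radius := χ.slide (χ.proj y) '' Icc 0 (χ.height y)
  have hradius : IsPreconnected radius :=
    isPreconnected_Icc.image _ (χ.continuous_slide.comp (Continuous.prodMk_right _)).continuousOn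
  have hradius_sub : radius ⊆ χ.flatInt X := by
    rintro _ ⟨h, hh, rfl⟩
    exact χ.slide_mem_flatInt hb hh.1 (hh.2.trans_lt hy)
  have hproj : χ.proj y ∈ radius :=
    ⟨0, ⟨le_rfl, χ.height_nonneg hyK⟩, χ.slide_zero (C.bd_subset_compl hb)⟩
  have hmem : y ∈ radius := ⟨χ.height y, ⟨χ.height_nonneg hyK, le_rfl⟩,
    χ.slide_proj_height hyK (hy.le.trans (χ.depth_proj_le_half y))⟩
  have hint : IsPreconnected (insert (χ.proj y) C.int) :=
    C.isConnected_int.isPreconnected.subset_closure (subset_insert _ _)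
      (insert_subset (χ.bd_subset_closure_int hb) subset_closure)
  exact ⟨insert (χ.proj y) C.int ∪ radius,
    union_subset (insert_subset (hradius_sub hproj) subset_union_left) hradius_sub,
    Or.inl (mem_insert_of_mem _ hx₀), Or.inr hmem,
    hint.union _ (mem_insert _ _) hproj hradius⟩

lemma flatBd_union_flatInt : χ.flatBd X ∪ χ.flatInt X =
    C.carrier ∪ {y | y ∈ C.compl ∧ χ.height y ≤ depth X (χ.proj y)} := by
  ext y
  have hbd : y ∈ C.bd → y ∈ C.compl ∧ χ.height y ≤ depth X (χ.proj y) := fun hy =>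
    ⟨C.bd_subset_compl hy, (χ.height_of_mem_bd hy).trans_le (depth_nonneg _)⟩
  simp only [flatBd, flatInt, carrier, mem_union, mem_ofPred_eq, le_iff_eq_or_lt] at hbd ⊢
  tauto

lemma isClosed_flatBd_union_flatInt : IsClosed (χ.flatBd X ∪ χ.flatInt X) :=
  χ.flatBd_union_flatInt ▸ C.isClosed_carrier.union
    (C.isClosed_compl.inter (isClosed_le χ.continuous_height χ.continuous_depth_proj))

lemma flatInt_subset_sphere : χ.flatInt X ⊆ Sph n :=
  union_subset C.int_subset_sphere fun _ hy => hy.1.1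

lemma disjoint_flatBd_flatInt : Disjoint (χ.flatBd X) (χ.flatInt X) :=
  disjoint_left.2 fun _ hy => not_or.2 ⟨hy.1.2, fun hy' => hy'.2.ne hy.2⟩

lemma flatInt_eq_connectedComponentIn (hx : x ∈ χ.flatInt X) :
    χ.flatInt X = connectedComponentIn (Sph n \ χ.flatBd X) x := by
  refine eq_connectedComponentIn_of_isOpen_of_isClosed
    (O := {y | y ∈ C.compl ∧ depth X (χ.proj y) ≤ χ.height y}ᶜ) χ.isPreconnected_flatInt hx
    (C.isClosed_compl.inter
      (isClosed_le χ.continuous_depth_proj χ.continuous_height)).isOpen_compl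
    (χ.isClosed_flatBd_union_flatInt (X := X)) ?_ ?_
  · ext y
    have hint : y ∈ C.int → y ∈ Sph n := fun hy => C.int_subset_sphere hy
    have heq : χ.height y = depth X (χ.proj y) → depth X (χ.proj y) ≤ χ.height y := Eq.ge
    simp only [flatBd, flatInt, compl, mem_union, mem_ofPred_eq, mem_sdiff, mem_inter_iff,
      mem_compl_iff, ← not_le]
    tauto
  · ext y
    exact ⟨fun hy => ⟨⟨χ.flatInt_subset_sphere hy,
      disjoint_right.1 χ.disjoint_flatBd_flatInt hy⟩, Or.inr hy⟩,
      fun hy => hy.2.resolve_left hy.1.2⟩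

/-- The flattening of a closed cell complement relative to `X`, obtained by pushing its boundary
into the complementary cell to the depth `depth X`. -/
def flattening (X : Set (Amb n)) : CrumpledCube n where
  bd := χ.flatBd X
  int := χ.flatInt X
  bd_subset_sphere := fun _ hy => hy.1.1
  exists_embedding := by
    obtain ⟨e, he, hinj, hr⟩ := C.exists_embedding
    have hmem : ∀ p, e p ∈ C.bd := fun p => hr ▸ mem_range_self p
    refine ⟨fun p => χ.flatHomeo X ⟨e p, hmem p⟩,
      continuous_subtype_val.comp ((χ.flatHomeo X).continuous.comp (he.subtype_mk hmem)),
      fun p q hpq => hinj (congrArg Subtype.val ((χ.flatHomeo X).injective (Subtype.ext hpq))),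
      Subset.antisymm (range_subset_iff.2 fun p => Subtype.prop _) fun y hy => ?_⟩
    obtain ⟨⟨x, hx⟩, hxy⟩ := (χ.flatHomeo X).surjective ⟨y, hy⟩
    obtain ⟨p, rfl⟩ := hr.symm ▸ hx
    exact ⟨p, congrArg Subtype.val hxy⟩
  int_component := by
    obtain ⟨x, hx⟩ := C.isConnected_int.nonempty
    have hx' : x ∈ χ.flatInt X := Or.inl hx
    exact ⟨x, ⟨χ.flatInt_subset_sphere hx', disjoint_right.1 χ.disjoint_flatBd_flatInt hx'⟩,
      χ.flatInt_eq_connectedComponentIn hx'⟩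

lemma mem_carrier_flattening : y ∈ (χ.flattening X).carrier ↔
    y ∈ C.carrier ∨ y ∈ C.compl ∧ χ.height y ≤ depth X (χ.proj y) :=
  iff_of_eq (congrArg (y ∈ ·) χ.flatBd_union_flatInt)

end CrumpledCube.ComplChart

/-! ### The collar of the boundary of a flattening -/

lemma locallyCollaredAt_of_lift {n : ℕ} {D : CrumpledCube n} {O : Set (Amb n)}
    {base : Amb n → Amb n} {ht : Amb n → ℝ} {lift : Amb n → ℝ → Amb n}
    (hO : IsOpen O) (hbase : ContinuousOn base (D.carrier ∩ O))
    (hht : ContinuousOn ht (D.carrier ∩ O)) (hlift : Continuous fun q : Amb n × ℝ => lift q.1 q.2)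
    (base_mem : ∀ y ∈ D.carrier ∩ O, base y ∈ D.bd ∩ O)
    (ht_mem : ∀ y ∈ D.carrier ∩ O, ht y ∈ Ico (0 : ℝ) 1)
    (lift_mem : ∀ q ∈ D.bd ∩ O, ∀ t ∈ Ico (0 : ℝ) 1, lift q t ∈ D.carrier ∩ O)
    (lift_base_ht : ∀ y ∈ D.carrier ∩ O, lift (base y) (ht y) = y)
    (base_lift : ∀ q ∈ D.bd ∩ O, ∀ t ∈ Ico (0 : ℝ) 1, base (lift q t) = q)
    (ht_lift : ∀ q ∈ D.bd ∩ O, ∀ t ∈ Ico (0 : ℝ) 1, ht (lift q t) = t)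
    (lift_zero : ∀ q ∈ D.bd ∩ O, lift q 0 = q) {p : Amb n} (hp : p ∈ D.bd) (hpO : p ∈ O) :
    LocallyCollaredAt D ⟨p, D.bd_subset_carrier hp⟩ := by
  let N : Set ↥D.carrier := Subtype.val ⁻¹' O
  have hN : ∀ y : ↥N, ((y : ↥D.carrier) : Amb n) ∈ D.carrier ∩ O := fun y => ⟨y.1.2, y.2⟩
  have hcoe : Continuous fun y : ↥N => ((y : ↥D.carrier) : Amb n) := by fun_prop
  let φ : ↥N ≃ₜ ↥(N ∩ {x : ↥D.carrier | (x : Amb n) ∈ D.bd}) × ↥(Ico (0 : ℝ) 1) :=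
    { toFun y :=
        (⟨⟨base y, D.bd_subset_carrier (base_mem y (hN y)).1⟩, (base_mem y (hN y)).symm⟩,
          ⟨ht y, ht_mem y (hN y)⟩)
      invFun q := ⟨⟨lift q.1 q.2, (lift_mem _ q.1.2.symm _ q.2.2).1⟩,
        (lift_mem _ q.1.2.symm _ q.2.2).2⟩
      left_inv y := Subtype.ext (Subtype.ext (lift_base_ht y (hN y)))
      right_inv q := Prod.ext
        (Subtype.ext (Subtype.ext (base_lift _ q.1.2.symm _ q.2.2)))
        (Subtype.ext (ht_lift _ q.1.2.symm _ q.2.2))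
      continuous_toFun := (((hbase.comp_continuous hcoe hN).subtype_mk _).subtype_mk _).prodMk
        ((hht.comp_continuous hcoe hN).subtype_mk _)
      continuous_invFun := Continuous.subtype_mk (Continuous.subtype_mk
        (hlift.comp (f := fun q : ↥(N ∩ {x : ↥D.carrier | (x : Amb n) ∈ D.bd}) × ↥(Ico (0 : ℝ) 1)
          => (((q.1 : ↥D.carrier) : Amb n), (q.2 : ℝ))) (by fun_prop)) _) _ }
  refine ⟨N, hO.preimage continuous_subtype_val, hpO, φ, fun y hy => ?_⟩
  have hq : ((y : ↥D.carrier) : Amb n) ∈ D.bd ∩ O := ⟨hy, y.2⟩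
  have h0 : (0 : ℝ) ∈ Ico (0 : ℝ) 1 := ⟨le_rfl, one_pos⟩
  have hbase0 : base y = y := by simpa only [lift_zero _ hq] using base_lift _ hq 0 h0
  have hht0 : ht y = 0 := by simpa only [lift_zero _ hq] using ht_lift _ hq 0 h0
  exact Prod.ext (Subtype.ext (Subtype.ext hbase0)) (Subtype.ext hht0)

namespace CrumpledCube.ComplChart

variable {n : ℕ} {C : CrumpledCube n} (χ : C.ComplChart) {X : Set (Amb n)} {x y : Amb n} {h : ℝ}

/-- The part of the flattening outside the crumpled cube. -/
def shell (X : Set (Amb n)) : Set (Amb n) := (χ.flattening X).carrier ∩ C.carrierᶜ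

variable {χ}

lemma mem_compl_of_mem_shell (hy : y ∈ χ.shell X) : y ∈ C.compl :=
  ((χ.mem_carrier_flattening.1 hy.1).resolve_left hy.2).1

lemma height_le_depth_of_mem_shell (hy : y ∈ χ.shell X) : χ.height y ≤ depth X (χ.proj y) :=
  ((χ.mem_carrier_flattening.1 hy.1).resolve_left hy.2).2

lemma height_pos_of_mem_shell (hy : y ∈ χ.shell X) : 0 < χ.height y :=
  χ.height_pos (mem_compl_of_mem_shell hy) (notMem_subset C.bd_subset_carrier hy.2)

lemma depth_proj_pos_of_mem_shell (hy : y ∈ χ.shell X) : 0 < depth X (χ.proj y) :=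
  (height_pos_of_mem_shell hy).trans_le (height_le_depth_of_mem_shell hy)

lemma proj_mem_bd_of_mem_shell (hy : y ∈ χ.shell X) : χ.proj y ∈ C.bd :=
  χ.proj_mem_bd_of_height_le_depth (height_le_depth_of_mem_shell hy)

lemma slide_mem_shell (hx : x ∈ C.bd) (h₀ : 0 < h) (h₁ : h ≤ depth X x) :
    χ.slide x h ∈ χ.shell X := by
  have hheight := χ.height_slide hx h₀.le (h₁.trans (depth_le_half (C.bd_subset_sphere hx)))
  refine ⟨χ.mem_carrier_flattening.2 (Or.inr ⟨χ.slide_mem_compl x h, ?_⟩), fun hC => ?_⟩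
  · rwa [χ.depth_proj_slide hx h₀.le h₁, hheight]
  · have hb := C.carrier_inter_compl.subset ⟨hC, χ.slide_mem_compl x h⟩
    exact h₀.ne (hheight ▸ χ.height_of_mem_bd hb).symm

lemma flatBd_sdiff_subset_shell (hX : IsClosed X) : χ.flatBd X \ X ⊆ χ.shell X := fun y hy => by
  refine ⟨(χ.flattening X).bd_subset_carrier hy.1, fun hC => ?_⟩
  have hb := C.carrier_inter_compl.subset ⟨hC, hy.1.1⟩
  have hdepth := hy.1.2
  rw [χ.height_of_mem_bd hb, χ.proj_of_mem_bd hb] at hdepth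
  exact (depth_pos hX hy.1.1.1 hy.2).ne hdepth

lemma mul_depth_mem_Ioc (hy : y ∈ χ.shell X) {t : ℝ} (ht : t ∈ Ico (0 : ℝ) 1) :
    (1 - t) * depth X (χ.proj y) ∈ Ioc 0 (depth X (χ.proj y)) :=
  have hpos := depth_proj_pos_of_mem_shell hy
  ⟨mul_pos (sub_pos.2 ht.2) hpos, mul_le_of_le_one_left hpos.le (by linarith [ht.1])⟩

lemma proj_slide_mul_depth (hy : y ∈ χ.shell X) {t : ℝ} (ht : t ∈ Ico (0 : ℝ) 1) :
    χ.proj (χ.slide (χ.proj y) ((1 - t) * depth X (χ.proj y))) = χ.proj y :=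
  have ht' := mul_depth_mem_Ioc hy ht
  χ.proj_slide (proj_mem_bd_of_mem_shell hy) ht'.1.le (ht'.2.trans (χ.depth_proj_le_half y))

lemma height_slide_mul_depth (hy : y ∈ χ.shell X) {t : ℝ} (ht : t ∈ Ico (0 : ℝ) 1) :
    χ.height (χ.slide (χ.proj y) ((1 - t) * depth X (χ.proj y))) =
      (1 - t) * depth X (χ.proj y) :=
  have ht' := mul_depth_mem_Ioc hy ht
  χ.height_slide (proj_mem_bd_of_mem_shell hy) ht'.1.le (ht'.2.trans (χ.depth_proj_le_half y))

lemma locallyCollaredAt_flattening (hX : IsClosed X) (hy : y ∈ (χ.flattening X).bd) (hyX : y ∉ X) :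
    LocallyCollaredAt (χ.flattening X) ⟨y, (χ.flattening X).bd_subset_carrier hy⟩ := by
  have hshell : ∀ q ∈ (χ.flattening X).bd ∩ C.carrierᶜ, q ∈ χ.shell X := fun q hq =>
    ⟨(χ.flattening X).bd_subset_carrier hq.1, hq.2⟩
  refine locallyCollaredAt_of_lift (O := C.carrierᶜ)
    (base := fun y => χ.slide (χ.proj y) (depth X (χ.proj y)))
    (ht := fun y => 1 - χ.height y / depth X (χ.proj y))
    (lift := fun q t => χ.slide (χ.proj q) ((1 - t) * depth X (χ.proj q)))
    C.isClosed_carrier.isOpen_compl (χ.continuous_slide_depth.comp χ.continuous_proj).continuousOn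
    (continuousOn_const.sub (χ.continuous_height.continuousOn.div
      χ.continuous_depth_proj.continuousOn fun y hy => (depth_proj_pos_of_mem_shell hy).ne'))
    (χ.continuous_slide_proj_one_sub_mul χ.continuous_depth_proj)
    (fun y hy => ?_) (fun y hy => ?_) (fun q hq t ht => ?_) (fun y hy => ?_) (fun q hq t ht => ?_)
    (fun q hq t ht => ?_) (fun q hq => ?_) hy
    (flatBd_sdiff_subset_shell hX ⟨hy, hyX⟩).2
  · have hb := proj_mem_bd_of_mem_shell hy
    exact ⟨χ.slide_depth_mem_flatBd hb,
      (slide_mem_shell hb (depth_proj_pos_of_mem_shell hy) le_rfl).2⟩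
  · have hpos := depth_proj_pos_of_mem_shell hy
    exact ⟨sub_nonneg.2 ((div_le_one hpos).2 (height_le_depth_of_mem_shell hy)),
      sub_lt_self _ (div_pos (height_pos_of_mem_shell hy) hpos)⟩
  · have ht' := mul_depth_mem_Ioc (hshell q hq) ht
    exact slide_mem_shell (proj_mem_bd_of_mem_shell (hshell q hq)) ht'.1 ht'.2
  · rw [χ.proj_slide_depth (proj_mem_bd_of_mem_shell hy), sub_sub_cancel,
      div_mul_cancel₀ _ (depth_proj_pos_of_mem_shell hy).ne']
    exact χ.slide_proj_height (mem_compl_of_mem_shell hy)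
      ((height_le_depth_of_mem_shell hy).trans (χ.depth_proj_le_half y))
  · rw [proj_slide_mul_depth (hshell q hq) ht]
    exact χ.slide_depth_proj hq.1
  · rw [proj_slide_mul_depth (hshell q hq) ht, height_slide_mul_depth (hshell q hq) ht,
      mul_div_cancel_right₀ _ (depth_proj_pos_of_mem_shell (hshell q hq)).ne', sub_sub_cancel]
  · rw [sub_zero, one_mul]
    exact χ.slide_depth_proj hq.1

end CrumpledCube.ComplChart

/-! ### Deforming a flattening to the crumpled cube -/

namespace CrumpledCube.ComplChart

variable {n : ℕ} {C : CrumpledCube n} (χ : C.ComplChart) {X : Set (Amb n)} {x y : Amb n} {t : ℝ}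

open scoped Classical in
/-- The deformation which fixes the crumpled cube and slides the points of the complementary cell
along their radii, reaching the boundary of the cell at time `1`. -/
def deform (y : Amb n) (t : ℝ) : Amb n :=
  if y ∈ C.carrier then y else χ.slide (χ.proj y) ((1 - t) * χ.height y)

lemma deform_of_mem_carrier (hy : y ∈ C.carrier) : χ.deform y t = y := if_pos hy

lemma deform_of_mem_compl (hy : y ∈ C.compl) :
    χ.deform y t = χ.slide (χ.proj y) ((1 - t) * χ.height y) := by
  by_cases hyC : y ∈ C.carrier
  · have hb := C.carrier_inter_compl.subset ⟨hyC, hy⟩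
    rw [χ.deform_of_mem_carrier hyC, χ.height_of_mem_bd hb, χ.proj_of_mem_bd hb, mul_zero,
      χ.slide_zero hy]
  · exact if_neg hyC

lemma continuousOn_deform :
    ContinuousOn (fun p : Amb n × ℝ => χ.deform p.1 p.2) (Sph n ×ˢ univ) := by
  rw [← C.carrier_union_compl, union_prod]
  refine ContinuousOn.union_of_isClosed ?_ ?_ (C.isClosed_carrier.prod isClosed_univ)
    (C.isClosed_compl.prod isClosed_univ)
  · exact continuousOn_fst.congr fun p hp => χ.deform_of_mem_carrier hp.1
  · exact (χ.continuous_slide_proj_one_sub_mul χ.continuous_height).continuousOn.congr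
      fun p hp => χ.deform_of_mem_compl hp.1

lemma deform_zero (hy : y ∈ (χ.flattening X).carrier) : χ.deform y 0 = y := by
  rcases χ.mem_carrier_flattening.1 hy with h | ⟨h, hle⟩
  · exact χ.deform_of_mem_carrier h
  · rw [χ.deform_of_mem_compl h, sub_zero, one_mul,
      χ.slide_proj_height h (hle.trans (χ.depth_proj_le_half y))]

lemma deform_one (hy : y ∈ C.compl) (hy' : χ.height y ≤ 1 / 2) : χ.deform y 1 = χ.proj y := by
  rw [χ.deform_of_mem_compl hy, sub_self, zero_mul,
    χ.slide_zero (C.bd_subset_compl (χ.proj_mem_bd hy'))]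

lemma deform_one_mem_bd (hy : y ∈ C.compl) (hy' : χ.height y ≤ 1 / 2) : χ.deform y 1 ∈ C.bd :=
  χ.deform_one hy hy' ▸ χ.proj_mem_bd hy'

lemma deform_one_mem_carrier (hy : y ∈ (χ.flattening X).carrier) : χ.deform y 1 ∈ C.carrier := by
  rcases χ.mem_carrier_flattening.1 hy with h | ⟨h, hle⟩
  · rwa [χ.deform_of_mem_carrier h]
  · exact Or.inl (χ.deform_one_mem_bd h (hle.trans (χ.depth_proj_le_half y)))

lemma deform_mem_flattening (hy : y ∈ (χ.flattening X).carrier) (ht : t ∈ Icc (0 : ℝ) 1) :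
    χ.deform y t ∈ (χ.flattening X).carrier := by
  rcases χ.mem_carrier_flattening.1 hy with h | ⟨h, hle⟩
  · rwa [χ.deform_of_mem_carrier h]
  have h₀ := mul_nonneg (sub_nonneg.2 ht.2) (χ.height_nonneg h)
  have h₁ : (1 - t) * χ.height y ≤ depth X (χ.proj y) :=
    (mul_le_of_le_one_left (χ.height_nonneg h) (by linarith [ht.1])).trans hle
  have hb := χ.proj_mem_bd_of_height_le_depth hle
  rw [χ.deform_of_mem_compl h, χ.mem_carrier_flattening]
  refine Or.inr ⟨χ.slide_mem_compl _ _, ?_⟩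
  rwa [χ.depth_proj_slide hb h₀ h₁, χ.height_slide hb h₀ (h₁.trans (χ.depth_proj_le_half y))]

lemma deform_one_slide_depth (hx : x ∈ C.bd) : χ.deform (χ.slide x (depth X x)) 1 = x := by
  have hflat := χ.slide_depth_mem_flatBd (X := X) hx
  rw [χ.deform_one hflat.1 (hflat.2.trans_le (χ.depth_proj_le_half _)), χ.proj_slide_depth hx]

lemma deform_one_eq_self (hy : y ∈ (χ.flattening X).carrier) (hr : χ.deform y 1 ∉ C.bd \ X) :
    χ.deform y 1 = y := by
  rcases χ.mem_carrier_flattening.1 hy with h | ⟨h, hle⟩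
  · exact χ.deform_of_mem_carrier h
  have hhalf := hle.trans (χ.depth_proj_le_half y)
  have hX : χ.proj y ∈ X := by
    by_contra hX
    exact hr ⟨χ.deform_one_mem_bd h hhalf, χ.deform_one h hhalf ▸ hX⟩
  have hb : y ∈ C.bd := (χ.height_eq_zero_iff h).1
    (le_antisymm (hle.trans_eq (depth_of_mem hX)) (χ.height_nonneg h))
  exact χ.deform_of_mem_carrier (Or.inl hb)

end CrumpledCube.ComplChart

/-! ### Pushing points to the complementary cell -/

lemma continuousWithinAt_smul_of_norm_le_one {α E : Type*} [TopologicalSpace α]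
    [NormedAddCommGroup E] [NormedSpace ℝ E] {a : α → ℝ} {u : α → E} {s : Set α} {x : α}
    (hu : ContinuousWithinAt u s x) (ha : ∀ z, ‖a z‖ ≤ 1)
    (h : u x = 0 ∨ ContinuousWithinAt a s x) : ContinuousWithinAt (fun z => a z • u z) s x := by
  rcases h with h | h
  · have hu₀ : Filter.Tendsto u (nhdsWithin x s) (nhds 0) := h ▸ hu
    rw [ContinuousWithinAt, h, smul_zero]
    exact Filter.IsBoundedUnder.smul_tendsto_zero (Filter.isBoundedUnder_of ⟨1, ha⟩) hu₀
  · exact h.smul hu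

namespace CrumpledCube

variable {n : ℕ} (C : CrumpledCube n)

lemma bd_nonempty : C.bd.Nonempty := by
  obtain ⟨e, -, -, hr⟩ := C.exists_embedding
  exact hr ▸ range_nonempty e

lemma infDist_bd_pos {x : Amb n} (hx : x ∉ C.bd) : 0 < infDist x C.bd :=
  (C.isCompact_bd.isClosed.notMem_iff_infDist_pos C.bd_nonempty).1 hx

end CrumpledCube

namespace CrumpledCube.ComplChart

variable {n : ℕ} {C : CrumpledCube n} (χ : C.ComplChart) {X : Set (Amb n)} {x v : Amb n}

/-- A retraction of the ambient space to the complementary cell. -/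
def toCompl (x : Amb n) : Amb n := χ.ofBall (χ.toBall x)

lemma continuous_toCompl : Continuous χ.toCompl := χ.continuous_ofBall.comp χ.continuous_toBall

lemma toCompl_mem (x : Amb n) : χ.toCompl x ∈ C.compl := χ.ofBall_mem _

lemma toCompl_of_mem_bd (hx : x ∈ C.bd) : χ.toCompl x = x :=
  χ.ofBall_toBall x (C.bd_subset_compl hx)

/-- The points of the ambient space which the radial projection to the sphere, followed by the
final stage of the deformation, carries into the crumpled cube and off `X`. -/
def admissible (X : Set (Amb n)) : Set (Amb n) :=
  {v | 1 / 2 < ‖v‖ ∧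
    (unitize v ∈ C.compl → χ.proj (unitize v) ∉ X ∧ χ.height (unitize v) < 1 / 2)}

lemma isOpen_admissible (hX : IsClosed X) : IsOpen (χ.admissible X) := by
  have hclosed : IsClosed (C.compl ∩ (χ.proj ⁻¹' X ∪ {z | 1 / 2 ≤ χ.height z})) :=
    C.isClosed_compl.inter ((hX.preimage χ.continuous_proj).union
      (isClosed_le continuous_const χ.continuous_height))
  have heq : χ.admissible X = {v | 1 / 2 < ‖v‖} ∩
      unitize ⁻¹' (C.compl ∩ (χ.proj ⁻¹' X ∪ {z | 1 / 2 ≤ χ.height z}))ᶜ := by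
    ext v
    simp only [admissible, mem_ofPred_eq, mem_inter_iff, mem_preimage, mem_compl_iff, mem_union,
      not_and, not_or, not_le]
  rw [heq]
  exact (isOpen_lt continuous_const continuous_norm).inter
    (hclosed.isOpen_compl.preimage continuous_unitize)

lemma unitize_mem_sphere (hv : v ∈ χ.admissible X) : unitize v ∈ Sph n :=
  mem_sphere_zero_iff_norm.2 (norm_unitize hv.1.le)

lemma deform_unitize_mem_bd_sdiff (hv : v ∈ χ.admissible X) (hK : unitize v ∈ C.compl) :
    χ.deform (unitize v) 1 ∈ C.bd \ X := by
  obtain ⟨hX, hheight⟩ := hv.2 hK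
  exact ⟨χ.deform_one_mem_bd hK hheight.le, χ.deform_one hK hheight.le ▸ hX⟩

lemma deform_unitize_mem_carrier_sdiff (hXb : X ⊆ C.bd) (hv : v ∈ χ.admissible X) :
    χ.deform (unitize v) 1 ∈ C.carrier \ X := by
  by_cases hK : unitize v ∈ C.compl
  · exact sdiff_subset_sdiff_left C.bd_subset_carrier (χ.deform_unitize_mem_bd_sdiff hv hK)
  · have hC : unitize v ∈ C.carrier :=
      (C.carrier_union_compl.superset (χ.unitize_mem_sphere hv)).resolve_right hK
    rw [χ.deform_of_mem_carrier hC]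
    exact ⟨hC, fun hX => hK (C.bd_subset_compl (hXb hX))⟩

/-- The points joined to their images in the complementary cell by an admissible segment. -/
def pushable (X : Set (Amb n)) : Set (Amb n) :=
  {x | ∀ t ∈ Icc (0 : ℝ) 1, AffineMap.lineMap x (χ.toCompl x) t ∈ χ.admissible X}

lemma isOpen_pushable (hX : IsClosed X) : IsOpen (χ.pushable X) := by
  have hline : Continuous fun p : Amb n × ℝ => AffineMap.lineMap p.1 (χ.toCompl p.1) p.2 :=
    continuous_fst.lineMap (χ.continuous_toCompl.comp continuous_fst) continuous_snd
  refine isOpen_iff_mem_nhds.2 fun x hx => ?_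
  exact isCompact_Icc.eventually_forall_of_forall_eventually fun t ht =>
    hline.continuousAt.eventually_mem ((χ.isOpen_admissible hX).mem_nhds (hx t ht))

lemma zero_notMem_pushable : (0 : Amb n) ∉ χ.pushable X := fun h => by
  have hnorm := (h 0 ⟨le_rfl, zero_le_one⟩).1
  rw [AffineMap.lineMap_apply_zero, norm_zero] at hnorm
  linarith

lemma bd_inter_pushable : C.bd ∩ χ.pushable X = C.bd \ X := by
  ext x
  refine and_congr_right fun hx => ?_
  have hline : ∀ t : ℝ, AffineMap.lineMap x (χ.toCompl x) t = x := fun t => by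
    rw [χ.toCompl_of_mem_bd hx, AffineMap.lineMap_same_apply]
  have hnorm : ‖x‖ = 1 := mem_sphere_zero_iff_norm.1 (C.bd_subset_sphere hx)
  have hunit : unitize x = x := unitize_of_norm_eq_one hnorm
  simp only [pushable, admissible, mem_ofPred_eq, hline, hunit, hnorm, χ.proj_of_mem_bd hx,
    χ.height_of_mem_bd hx]
  exact ⟨fun h => ((h 0 ⟨le_rfl, zero_le_one⟩).2 (C.bd_subset_compl hx)).1,
    fun h _ _ => ⟨one_half_lt_one, fun _ => ⟨h, one_half_pos⟩⟩⟩

/-- A function equal to `2` on `Bd C \ X`, less than `2` off `Bd C` and vanishing at the points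
which are not pushable. As it runs from `0` to `1` a point is pushed to `Bd C`, and from `1` to `2`
it is pushed further, to the boundary of the flattening. On `X` it is `0 / 0 = 0`. -/
def weight (X : Set (Amb n)) (x : Amb n) : ℝ :=
  2 * infDist x (χ.pushable X)ᶜ / (infDist x C.bd + infDist x (χ.pushable X)ᶜ)

lemma weight_nonneg (x : Amb n) : 0 ≤ χ.weight X x :=
  div_nonneg (mul_nonneg zero_le_two infDist_nonneg) (add_nonneg infDist_nonneg infDist_nonneg)

lemma weight_of_notMem_pushable (hx : x ∉ χ.pushable X) : χ.weight X x = 0 := by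
  rw [weight, infDist_zero_of_mem (mem_compl hx), mul_zero, zero_div]

lemma infDist_compl_pushable_pos (hX : IsClosed X) (hx : x ∈ χ.pushable X) :
    0 < infDist x (χ.pushable X)ᶜ :=
  ((χ.isOpen_pushable hX).isClosed_compl.notMem_iff_infDist_pos ⟨0, χ.zero_notMem_pushable⟩).1
    (not_not.2 hx)

lemma weight_of_mem_bd (hX : IsClosed X) (hx : x ∈ C.bd) (hxX : x ∉ X) : χ.weight X x = 2 := by
  have hpush : x ∈ χ.pushable X := (χ.bd_inter_pushable.superset ⟨hx, hxX⟩).2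
  rw [weight, infDist_zero_of_mem hx, zero_add,
    mul_div_cancel_right₀ _ (χ.infDist_compl_pushable_pos hX hpush).ne']

lemma weight_lt_two (hx : x ∉ C.bd) : χ.weight X x < 2 := by
  have hpos := C.infDist_bd_pos hx
  rw [weight, div_lt_iff₀ (add_pos_of_pos_of_nonneg hpos infDist_nonneg)]
  linarith

lemma weight_le_two (x : Amb n) : χ.weight X x ≤ 2 := by
  have hbd : 0 ≤ infDist x C.bd := infDist_nonneg
  refine div_le_of_le_mul₀ (add_nonneg hbd infDist_nonneg) zero_le_two ?_
  linarith

lemma continuousAt_weight (hX : IsClosed X) (hx : x ∉ X) : ContinuousAt (χ.weight X) x := by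
  have hpos : 0 < infDist x C.bd + infDist x (χ.pushable X)ᶜ := by
    by_cases hb : x ∈ C.bd
    · exact add_pos_of_nonneg_of_pos infDist_nonneg
        (χ.infDist_compl_pushable_pos hX (χ.bd_inter_pushable.superset ⟨hb, hx⟩).2)
    · exact add_pos_of_pos_of_nonneg (C.infDist_bd_pos hb) infDist_nonneg
  exact (continuous_const.mul (continuous_infDist_pt _)).continuousAt.div
    ((continuous_infDist_pt _).add (continuous_infDist_pt _)).continuousAt hpos.ne'

end CrumpledCube.ComplChart

/-! ### The map associated with a flattening -/

namespace CrumpledCube.ComplChart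

variable {n : ℕ} {C : CrumpledCube n} (χ : C.ComplChart) {X : Set (Amb n)} {x : Amb n}

lemma mem_pushable_of_weight_pos (h : 0 < χ.weight X x) : x ∈ χ.pushable X :=
  not_not.1 fun hx => h.ne' (χ.weight_of_notMem_pushable hx)

/-- The point reached from `x` on the segment towards the complementary cell when the parameter
`weight X x`, truncated at `1`, is used up. -/
def push (X : Set (Amb n)) (x : Amb n) : Amb n :=
  AffineMap.lineMap x (χ.toCompl x) (min (χ.weight X x) 1)

lemma push_of_weight_eq_zero (h : χ.weight X x = 0) : χ.push X x = x := by
  rw [push, h, min_eq_left zero_le_one, AffineMap.lineMap_apply_zero]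

lemma push_of_one_le_weight (h : 1 ≤ χ.weight X x) : χ.push X x = χ.toCompl x := by
  rw [push, min_eq_right h, AffineMap.lineMap_apply_one]

lemma push_of_mem_bd (hx : x ∈ C.bd) : χ.push X x = x := by
  rw [push, χ.toCompl_of_mem_bd hx, AffineMap.lineMap_same_apply]

lemma push_mem_admissible (h : 0 < χ.weight X x) : χ.push X x ∈ χ.admissible X :=
  χ.mem_pushable_of_weight_pos h _ ⟨le_min h.le zero_le_one, min_le_right _ _⟩

lemma unitize_push_mem_sphere (hx : x ∈ C.carrier) : unitize (χ.push X x) ∈ Sph n := by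
  rcases (χ.weight_nonneg (X := X) x).eq_or_lt with h | h
  · have hS := C.carrier_subset_sphere hx
    rwa [χ.push_of_weight_eq_zero h.symm, unitize_of_norm_eq_one (mem_sphere_zero_iff_norm.1 hS)]
  · exact χ.unitize_mem_sphere (χ.push_mem_admissible h)

lemma continuousOn_push (hX : IsClosed X) (hXb : X ⊆ C.bd) :
    ContinuousOn (χ.push X) C.carrier := fun x hx => by
  have hsmul : ContinuousWithinAt
      (fun z => min (χ.weight X z) 1 • (χ.toCompl z - z)) C.carrier x := by
    refine continuousWithinAt_smul_of_norm_le_one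
      (χ.continuous_toCompl.sub continuous_id).continuousWithinAt (fun z => ?_) ?_
    · rw [Real.norm_of_nonneg (le_min (χ.weight_nonneg z) zero_le_one)]
      exact min_le_right _ _
    · by_cases hxX : x ∈ X
      · exact Or.inl (sub_eq_zero.2 (χ.toCompl_of_mem_bd (hXb hxX)))
      · exact Or.inr ((χ.continuousAt_weight hX hxX).inf continuousAt_const).continuousWithinAt
  refine (hsmul.add continuousWithinAt_id).congr_of_mem (fun z _ => ?_) hx
  exact AffineMap.lineMap_apply_module' _ _ _

/-- The retraction of the pushed point to the crumpled cube, at which the point `x` leaves the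
crumpled cube if its weight exceeds `1`. -/
def foot (X : Set (Amb n)) (x : Amb n) : Amb n := χ.deform (unitize (χ.push X x)) 1

lemma foot_of_push_eq_self (hx : x ∈ C.carrier) (h : χ.push X x = x) : χ.foot X x = x := by
  have hnorm := mem_sphere_zero_iff_norm.1 (C.carrier_subset_sphere hx)
  rw [foot, h, unitize_of_norm_eq_one hnorm, χ.deform_of_mem_carrier hx]

lemma foot_of_mem_bd (hx : x ∈ C.bd) : χ.foot X x = x :=
  χ.foot_of_push_eq_self (C.bd_subset_carrier hx) (χ.push_of_mem_bd hx)

lemma foot_mem_carrier_sdiff (hXb : X ⊆ C.bd) (hx : x ∈ C.int) :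
    χ.foot X x ∈ C.carrier \ X := by
  rcases (χ.weight_nonneg (X := X) x).eq_or_lt with h | h
  · rw [χ.foot_of_push_eq_self (Or.inr hx) (χ.push_of_weight_eq_zero h.symm)]
    exact ⟨Or.inr hx, fun hxX => C.notMem_bd_of_mem_int hx (hXb hxX)⟩
  · exact χ.deform_unitize_mem_carrier_sdiff hXb (χ.push_mem_admissible h)

lemma foot_mem_bd_sdiff (h : 1 ≤ χ.weight X x) : χ.foot X x ∈ C.bd \ X := by
  refine χ.deform_unitize_mem_bd_sdiff (χ.push_mem_admissible (one_pos.trans_le h)) ?_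
  have hK := χ.toCompl_mem x
  rwa [χ.push_of_one_le_weight h, unitize_of_norm_eq_one (mem_sphere_zero_iff_norm.1 hK.1)]

lemma continuousOn_foot (hX : IsClosed X) (hXb : X ⊆ C.bd) :
    ContinuousOn (χ.foot X) C.carrier :=
  χ.continuousOn_deform.comp
    ((continuous_unitize.comp_continuousOn (χ.continuousOn_push hX hXb)).prodMk
      continuousOn_const) fun _ hx => ⟨χ.unitize_push_mem_sphere hx, mem_univ _⟩

/-- The height over its foot to which a point is carried. -/
def lift (X : Set (Amb n)) (x : Amb n) : ℝ := max (χ.weight X x - 1) 0 * depth X (χ.foot X x)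

lemma lift_of_weight_le_one (h : χ.weight X x ≤ 1) : χ.lift X x = 0 := by
  rw [lift, max_eq_right (sub_nonpos.2 h), zero_mul]

lemma lift_nonneg (x : Amb n) : 0 ≤ χ.lift X x :=
  mul_nonneg (le_max_right _ _) (depth_nonneg _)

lemma lift_of_mem_bd (hX : IsClosed X) (hx : x ∈ C.bd) : χ.lift X x = depth X x := by
  rw [lift, χ.foot_of_mem_bd hx]
  by_cases hxX : x ∈ X
  · rw [depth_of_mem hxX, mul_zero]
  · rw [χ.weight_of_mem_bd hX hx hxX, max_eq_left (by norm_num), sub_eq_iff_eq_add.2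
      one_add_one_eq_two.symm, one_mul]

lemma lift_lt_depth_foot (hX : IsClosed X) (hx : x ∉ C.bd) (h : 1 ≤ χ.weight X x) :
    χ.lift X x < depth X (χ.foot X x) := by
  obtain ⟨hb, hfX⟩ := χ.foot_mem_bd_sdiff h
  refine mul_lt_of_lt_one_left (depth_pos hX (C.bd_subset_sphere hb) hfX) ?_
  exact max_lt (by linarith [χ.weight_lt_two (X := X) hx]) one_pos

lemma continuousOn_lift (hX : IsClosed X) (hXb : X ⊆ C.bd) :
    ContinuousOn (χ.lift X) C.carrier := fun x hx => by
  refine continuousWithinAt_smul_of_norm_le_one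
    (continuous_depth.comp_continuousOn (χ.continuousOn_foot hX hXb) x hx) (fun z => ?_) ?_
  · rw [Real.norm_of_nonneg (le_max_right _ _)]
    exact max_le (by linarith [χ.weight_le_two (X := X) z]) zero_le_one
  · by_cases hxX : x ∈ X
    · exact Or.inl (by rw [χ.foot_of_mem_bd (hXb hxX), depth_of_mem hxX])
    · exact Or.inr (((χ.continuousAt_weight hX hxX).sub continuousAt_const).sup
        continuousAt_const).continuousWithinAt

open scoped Classical in
/-- The radial coordinates on the complementary cell at the points of `Bd C`, extended to the
points of height `0` over the crumpled cube. -/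
def raise (y : Amb n) (h : ℝ) : Amb n := if y ∈ C.bd then χ.slide y h else y

lemma raise_of_mem_bd (hx : x ∈ C.bd) (h : ℝ) : χ.raise x h = χ.slide x h := if_pos hx

lemma raise_zero (x : Amb n) : χ.raise x 0 = x := by
  by_cases hx : x ∈ C.bd
  · rw [χ.raise_of_mem_bd hx, χ.slide_zero (C.bd_subset_compl hx)]
  · exact if_neg hx

lemma continuousOn_raise :
    ContinuousOn (fun p : Amb n × ℝ => χ.raise p.1 p.2) (C.carrier ×ˢ {0} ∪ C.bd ×ˢ univ) := by
  refine ContinuousOn.union_of_isClosed ?_ ?_ (C.isClosed_carrier.prod isClosed_singleton)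
    (C.isCompact_bd.isClosed.prod isClosed_univ)
  · refine continuousOn_fst.congr ?_
    rintro ⟨x, h⟩ ⟨-, rfl⟩
    exact χ.raise_zero x
  · exact χ.continuous_slide.continuousOn.congr fun p hp => χ.raise_of_mem_bd hp.1 p.2

/-- A map from the crumpled cube to its flattening relative to `X`, which carries each point near
`Bd C \ X` first to `Bd C` and then up along a radius of the complementary cell. -/
def flatMap (X : Set (Amb n)) (x : Amb n) : Amb n := χ.raise (χ.foot X x) (χ.lift X x)

lemma foot_lift_mem (hXb : X ⊆ C.bd) (hx : x ∈ C.carrier) :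
    (χ.foot X x, χ.lift X x) ∈ C.carrier ×ˢ {0} ∪ C.bd ×ˢ univ := by
  rcases hx with hx | hx
  · exact Or.inr ⟨(χ.foot_of_mem_bd hx).symm ▸ hx, mem_univ _⟩
  rcases le_total (χ.weight X x) 1 with h | h
  · exact Or.inl ⟨(χ.foot_mem_carrier_sdiff hXb hx).1, χ.lift_of_weight_le_one h⟩
  · exact Or.inr ⟨(χ.foot_mem_bd_sdiff h).1, mem_univ _⟩

lemma continuousOn_flatMap (hX : IsClosed X) (hXb : X ⊆ C.bd) :
    ContinuousOn (χ.flatMap X) C.carrier :=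
  χ.continuousOn_raise.comp ((χ.continuousOn_foot hX hXb).prodMk (χ.continuousOn_lift hX hXb))
    fun _ hx => χ.foot_lift_mem hXb hx

lemma flatMap_of_mem_bd (hX : IsClosed X) (hx : x ∈ C.bd) :
    χ.flatMap X x = χ.slide x (depth X x) := by
  rw [flatMap, χ.foot_of_mem_bd hx, χ.lift_of_mem_bd hX hx, χ.raise_of_mem_bd hx]

lemma carrier_sdiff_subset_flatInt (hX : IsClosed X) : C.carrier \ X ⊆ χ.flatInt X := by
  rintro x ⟨hx | hx, hxX⟩
  · rw [← χ.slide_zero (C.bd_subset_compl hx)]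
    exact χ.slide_mem_flatInt hx le_rfl (depth_pos hX (C.bd_subset_sphere hx) hxX)
  · exact Or.inl hx

lemma flatMap_mem_flatInt (hX : IsClosed X) (hXb : X ⊆ C.bd) (hx : x ∈ C.int) :
    χ.flatMap X x ∈ χ.flatInt X := by
  rcases le_total (χ.weight X x) 1 with h | h
  · rw [flatMap, χ.lift_of_weight_le_one h, χ.raise_zero]
    exact χ.carrier_sdiff_subset_flatInt hX (χ.foot_mem_carrier_sdiff hXb hx)
  · have hb := (χ.foot_mem_bd_sdiff h).1
    rw [flatMap, χ.raise_of_mem_bd hb]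
    exact χ.slide_mem_flatInt hb (χ.lift_nonneg x)
      (χ.lift_lt_depth_foot hX (C.notMem_bd_of_mem_int hx) h)

lemma memW_flattening (hX : IsClosed X) (hXb : X ⊆ C.bd) :
    MemW C (χ.flattening X) (χ.flatHomeo X) := by
  have hbd : ∀ x ∈ C.bd, χ.flatMap X x ∈ (χ.flattening X).bd := fun x hx =>
    χ.flatMap_of_mem_bd hX hx ▸ χ.slide_depth_mem_flatBd hx
  have hint : ∀ x ∈ C.int, χ.flatMap X x ∈ (χ.flattening X).int := fun x hx =>
    χ.flatMap_mem_flatInt hX hXb hx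
  refine ⟨fun x => ⟨χ.flatMap X x, x.2.imp (hbd x) (hint x)⟩,
    (χ.continuousOn_flatMap hX hXb).domRestrict.subtype_mk _,
    fun x hx => χ.flatMap_of_mem_bd hX hx, fun x => ⟨fun h => ?_, hbd x⟩⟩
  exact x.2.resolve_right fun hx => (χ.flattening X).notMem_bd_of_mem_int (hint x hx) h

lemma isStandardFlattening (hX : IsClosed X) (hXb : X ⊆ C.bd) :
    IsStandardFlattening C X (χ.flattening X) (χ.flatHomeo X) := by
  set D := χ.flattening X
  have hmem : ∀ (y : ↥D.carrier) (t : I), χ.deform y t ∈ D.carrier := fun y t =>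
    χ.deform_mem_flattening y.2 t.2
  have hdeform : Continuous fun p : ↥D.carrier × I => χ.deform p.1 p.2 :=
    χ.continuousOn_deform.comp_continuous
      (f := fun p : ↥D.carrier × I => ((p.1 : Amb n), (p.2 : ℝ))) (by fun_prop)
      fun p => ⟨D.carrier_subset_sphere p.1.2, mem_univ _⟩
  let F : C(↥D.carrier × I, ↥D.carrier) := ⟨fun p => ⟨_, hmem p.1 p.2⟩, hdeform.subtype_mk _⟩
  refine ⟨χ.memW_flattening hX hXb, fun x hx => ?_,
    fun y hy => χ.mem_carrier_flattening.2 (Or.inl hy),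
    fun p hp hpX => locallyCollaredAt_flattening hX hp hpX,
    fun y => F (y, 1), F.continuous.comp (Continuous.prodMk_left 1),
    fun y => χ.deform_one_mem_carrier y.2, fun y hy => Subtype.ext (χ.deform_of_mem_carrier hy),
    ⟨F, fun y => Subtype.ext (χ.deform_zero y.2), fun y => rfl,
      fun y t hy => Subtype.ext (χ.deform_of_mem_carrier hy)⟩,
    fun x _ => χ.deform_one_slide_depth x.2, ?_⟩
  · change χ.slide x (depth X x) = x
    rw [depth_of_mem hx, χ.slide_zero (C.bd_subset_compl x.2)]
  · rintro y ⟨y', hne, heq⟩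
    by_contra hr
    have heq' : χ.deform y' 1 = χ.deform y 1 := congrArg Subtype.val heq
    have hy : χ.deform y 1 = y := χ.deform_one_eq_self y.2 hr
    have hy' : χ.deform y' 1 = y' := χ.deform_one_eq_self y'.2 (heq' ▸ hr)
    exact hne (Subtype.ext (hy'.symm.trans (heq'.trans hy)))

end CrumpledCube.ComplChart

/-- **Existence of standard flattenings (Section 5).** For every closed
`n`-cell-complement `C` and every closed subset `X ⊆ Bd C`, a standard flattening of `C`
relative to `X` exists. -/
theorem stmt10 (n : ℕ) (hn : 2 ≤ n) (C : CrumpledCube n) (hC : IsClosedCellComplement C)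
    (X : Set (Amb n)) (hXc : IsClosed X) (hXb : X ⊆ C.bd) :
    ∃ (CX : CrumpledCube n) (hX : ↥C.bd ≃ₜ ↥CX.bd), IsStandardFlattening C X CX hX := by
  obtain ⟨χ⟩ := hC.nonempty_complChart hn
  exact ⟨χ.flattening X, χ.flatHomeo X, χ.isStandardFlattening hXc hXb⟩
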